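/- There exists C > 0, depending only on φ, such that for every admissible finite collection 𝓘 = {[a_m,b_m]}_{m=1}^N and every locally integrable f : ℝ → ℂ with finite BMO seminorm ‖f‖_* = sup_J (1/|J|) ∫_J |f − f_J| (the supremum over all bounded intervals J, f_J denoting the average of f over J), the rotated family g_m(x) = e^{−2πi a_m x}(f∗φ_m)(x) satisfies sup_J (1/|J|) ∫_J ( Σ_{m=1}^N |g_m(x) − (g_m)_J|² )^{1/2} dx ≤ C ‖f‖_*. (Uniform boundedness of the rotated family from BMO to BMO(ℓ²), i.e. on Ḟ^0_{∞2}.) -/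

import Mathlib

open MeasureTheory Real Set Function
open scoped FourierTransform ENNReal NNReal

/-- `e2pi t = e^{2πit}`. -/
noncomputable def e2pi (t : ℝ) : ℂ := Complex.exp (2 * (Real.pi : ℂ) * Complex.I * (t : ℂ))

/-- Convolution of two functions on `ℝ`. -/
noncomputable def conv (f g : ℝ → ℂ) (x : ℝ) : ℂ := ∫ t, f t * g (x - t)

/-- The function `φ_m` associated with the interval `[a,b]`: its Fourier transform is
`ξ ↦ 𝓕φ ((ξ - a)/(b - a))`; in space variables it is `x ↦ (b-a) e^{2πiax} φ((b-a)x)`. -/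
noncomputable def phim (φ : ℝ → ℂ) (a b : ℝ) (x : ℝ) : ℂ :=
  ((b - a : ℝ) : ℂ) * e2pi (a * x) * φ ((b - a) * x)

/-- A finite collection of compact intervals `[a m, b m]` is admissible if the intervals are
nondegenerate, pairwise disjoint, and none of them contains `0` in its interior. -/
def Admissible {N : ℕ} (a b : Fin N → ℝ) : Prop :=
  (∀ m, a m < b m) ∧ (∀ m, (0 : ℝ) ∉ Set.Ioo (a m) (b m)) ∧
    ∀ m m', m ≠ m' → Disjoint (Set.Icc (a m) (b m)) (Set.Icc (a m') (b m'))

/-- The rotated Rubio de Francia piece `g_m(x) = e^{-2πi a x} (f ∗ φ_m)(x)`. -/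
noncomputable def rotConv (φ : ℝ → ℂ) (a b : ℝ) (f : ℝ → ℂ) (x : ℝ) : ℂ :=
  e2pi (-(a * x)) * conv f (phim φ a b) x

/-!
By translation and dilation it suffices to bound the oscillation on `(-1, 1]`. Subtracting from `f`
its average over `(-2, 2]` changes nothing, since each `φ_m` has mean zero; then split `f` at
`|t| = 2`.

The near part is controlled in `L²`: the multipliers `φ̂_m` have disjoint supports, so Plancherel
bounds the square function of the near part by its `L²` norm, which is at most a multiple of the BMO
seminorm by the dyadic `L²` form of the John–Nirenberg inequality.

For the far part `h`, the rotation makes the `m`-th component at `x` equal to the Fourier transform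
of `δ h φ(δ(x - ·))` at the frequency `a_m`, where `δ = b_m - a_m`. Intervals with lengths in one
dyadic range have separated left endpoints, so a large sieve inequality bounds the sum over them,
and increments in `x` gain a factor comparable to `min(δ, 1/δ)` from the smoothness and the decay of
`φ`; hence the scales are summable. What remains is the `L²` norm of `h` with weight `(1 + |t|)⁻²`,
again at most a multiple of the BMO seminorm.
-/

section MeanSquare

variable {α E : Type*} [MeasurableSpace α] {μ : Measure α} [NormedAddCommGroup E]

theorem enorm_add_sq_le (x y : E) : ‖x + y‖ₑ ^ 2 ≤ 2 * (‖x‖ₑ ^ 2 + ‖y‖ₑ ^ 2) := by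
  have h : (‖x‖ₑ + ‖y‖ₑ) ^ 2 ≤ 2 * (‖x‖ₑ ^ 2 + ‖y‖ₑ ^ 2) := by
    have := ENNReal.rpow_add_le_mul_rpow_add_rpow ‖x‖ₑ ‖y‖ₑ one_le_two
    norm_num at this
    exact this
  exact (pow_le_pow_left' (enorm_add_le x y) 2).trans h

theorem enorm_sub_sq_le (x y : E) : ‖x - y‖ₑ ^ 2 ≤ 2 * (‖x‖ₑ ^ 2 + ‖y‖ₑ ^ 2) := by
  simpa only [sub_eq_add_neg, enorm_neg] using enorm_add_sq_le x (-y)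

theorem enorm_sqrt_sum_sq {ι : Type*} [Fintype ι] (y : ι → E) :
    ‖√(∑ m, ‖y m‖ ^ 2)‖ₑ ^ 2 = ∑ m, ‖y m‖ₑ ^ 2 := by
  rw [Real.enorm_of_nonneg (Real.sqrt_nonneg _), ← ENNReal.ofReal_pow (Real.sqrt_nonneg _),
    Real.sq_sqrt (by positivity), ENNReal.ofReal_sum_of_nonneg fun m _ => by positivity]
  simp only [ENNReal.ofReal_pow (norm_nonneg _), ofReal_norm]

theorem lintegral_sq_le {g : α → ℝ≥0∞} (hg : AEMeasurable g μ) :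
    (∫⁻ x, g x ∂μ) ^ 2 ≤ μ univ * ∫⁻ x, g x ^ 2 ∂μ := by
  have holder := ENNReal.lintegral_mul_le_Lp_mul_Lq μ Real.HolderConjugate.two_two
    (f := fun _ => 1) (g := g) aemeasurable_const hg
  simp only [Pi.mul_apply, ENNReal.rpow_two, one_pow, lintegral_const,
    one_mul] at holder
  calc (∫⁻ x, g x ∂μ) ^ 2
      ≤ (μ univ ^ (1 / 2 : ℝ) * (∫⁻ x, g x ^ 2 ∂μ) ^ (1 / 2 : ℝ)) ^ 2 := by gcongr
    _ = μ univ * ∫⁻ x, g x ^ 2 ∂μ := by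
        simp only [mul_pow, ← ENNReal.rpow_mul_natCast]
        norm_num

theorem eLpNorm_two_sq (g : α → E) : eLpNorm g 2 μ ^ 2 = ∫⁻ x, ‖g x‖ₑ ^ 2 ∂μ := by
  simpa using eLpNorm_nnreal_pow_eq_lintegral (f := g) (μ := μ) (two_ne_zero' ℝ≥0)

theorem memLp_two_iff {g : α → E} :
    MemLp g 2 μ ↔ AEStronglyMeasurable g μ ∧ ∫⁻ x, ‖g x‖ₑ ^ 2 ∂μ < ∞ := by
  refine and_congr_right fun _ => ?_
  rw [← eLpNorm_two_sq]
  simp [ENNReal.pow_lt_top_iff]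

theorem lintegral_enorm_sub_const_sq_le (g : α → E) (c d : E) :
    ∫⁻ x, ‖g x - c‖ₑ ^ 2 ∂μ ≤ 2 * (∫⁻ x, ‖g x - d‖ₑ ^ 2 ∂μ + μ univ * ‖d - c‖ₑ ^ 2) := by
  rw [mul_comm (μ univ), ← lintegral_const, ← lintegral_add_right _ measurable_const,
    ← lintegral_const_mul' _ _ ENNReal.ofNat_ne_top]
  refine lintegral_mono fun x => ?_
  rw [← sub_add_sub_cancel (g x) d c]
  exact enorm_add_sq_le _ _

variable [NormedSpace ℝ E] [IsFiniteMeasure μ]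

theorem measure_univ_mul_enorm_average_le (g : α → E) :
    μ univ * ‖⨍ x, g x ∂μ‖ₑ ≤ ∫⁻ x, ‖g x‖ₑ ∂μ := by
  rw [← ofReal_measureReal, ← Real.enorm_of_nonneg measureReal_nonneg, ← enorm_smul,
    measure_smul_average]
  exact enorm_integral_le_lintegral_enorm g

theorem measure_univ_mul_enorm_average_sq_le {g : α → E} (hg : AEStronglyMeasurable g μ) :
    μ univ * ‖⨍ x, g x ∂μ‖ₑ ^ 2 ≤ ∫⁻ x, ‖g x‖ₑ ^ 2 ∂μ := by
  rcases eq_or_ne (μ univ) 0 with h0 | h0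
  · simp [h0]
  refine (ENNReal.mul_le_mul_iff_right h0 (measure_ne_top μ univ)).1 ?_
  calc μ univ * (μ univ * ‖⨍ x, g x ∂μ‖ₑ ^ 2) = (μ univ * ‖⨍ x, g x ∂μ‖ₑ) ^ 2 := by ring
    _ ≤ (∫⁻ x, ‖g x‖ₑ ∂μ) ^ 2 := by gcongr; exact measure_univ_mul_enorm_average_le g
    _ ≤ μ univ * ∫⁻ x, ‖g x‖ₑ ^ 2 ∂μ := lintegral_sq_le hg.enorm

variable [CompleteSpace E]

theorem average_sub_const [NeZero μ] {g : α → E} (hg : Integrable g μ) (c : E) :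
    ⨍ x, (g x - c) ∂μ = (⨍ x, g x ∂μ) - c := by
  nth_rw 2 [← average_const μ c]
  simp only [average_eq, integral_sub hg (integrable_const c), smul_sub]

theorem measure_univ_mul_enorm_average_sub_le {g : α → E} (hg : Integrable g μ) (c : E) :
    μ univ * ‖(⨍ x, g x ∂μ) - c‖ₑ ≤ ∫⁻ x, ‖g x - c‖ₑ ∂μ := by
  rcases eq_or_ne μ 0 with rfl | hμ
  · simp
  have : NeZero μ := ⟨hμ⟩
  simpa only [average_sub_const hg] using
    measure_univ_mul_enorm_average_le (μ := μ) fun x => g x - c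

theorem lintegral_enorm_sub_average_sq_le {g : α → E} (hg : AEStronglyMeasurable g μ) (c : E) :
    ∫⁻ x, ‖g x - ⨍ y, g y ∂μ‖ₑ ^ 2 ∂μ ≤ 4 * ∫⁻ x, ‖g x - c‖ₑ ^ 2 ∂μ := by
  rcases eq_or_ne μ 0 with rfl | hμ
  · simp
  have : NeZero μ := ⟨hμ⟩
  have hgc : AEStronglyMeasurable (fun x => g x - c) μ := hg.sub aestronglyMeasurable_const
  rcases eq_or_ne (∫⁻ x, ‖g x - c‖ₑ ^ 2 ∂μ) ∞ with htop | htop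
  · simp [htop]
  have hint : Integrable g μ := by
    have := ((memLp_two_iff.2 ⟨hgc, htop.lt_top⟩).integrable one_le_two).add (integrable_const c)
    exact this.congr (.of_forall fun x => sub_add_cancel (g x) c)
  calc ∫⁻ x, ‖g x - ⨍ y, g y ∂μ‖ₑ ^ 2 ∂μ
      ≤ 2 * (∫⁻ x, ‖g x - c‖ₑ ^ 2 ∂μ + μ univ * ‖⨍ x, (g x - c) ∂μ‖ₑ ^ 2) := by
        rw [average_sub_const hint, ← enorm_neg (_ - c), neg_sub]
        exact lintegral_enorm_sub_const_sq_le g _ c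
    _ ≤ 2 * (∫⁻ x, ‖g x - c‖ₑ ^ 2 ∂μ + ∫⁻ x, ‖g x - c‖ₑ ^ 2 ∂μ) := by
        gcongr
        exact measure_univ_mul_enorm_average_sq_le hgc
    _ = 4 * ∫⁻ x, ‖g x - c‖ₑ ^ 2 ∂μ := by ring

theorem average_sqrt_sum_sq_sub_average_le {ι : Type*} [Fintype ι] {G : ι → α → E}
    (hG : ∀ m, AEStronglyMeasurable (G m) μ) {c : ι → E} {D : ℝ} (hD : 0 ≤ D)
    (h : ∑ m, ∫⁻ x, ‖G m x - c m‖ₑ ^ 2 ∂μ ≤ ENNReal.ofReal (D ^ 2) * μ univ) :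
    ⨍ x, √(∑ m, ‖G m x - ⨍ y, G m y ∂μ‖ ^ 2) ∂μ ≤ 2 * D := by
  rcases eq_or_ne μ 0 with rfl | hμ
  · simpa using hD
  have hGm m : AEStronglyMeasurable (fun x => G m x - ⨍ y, G m y ∂μ) μ :=
    (hG m).sub aestronglyMeasurable_const
  have hmeas m : AEMeasurable (fun x => ‖G m x - ⨍ y, G m y ∂μ‖ₑ ^ 2) μ :=
    (hGm m).enorm.pow_const 2
  have hH : AEStronglyMeasurable (fun x => √(∑ m, ‖G m x - ⨍ y, G m y ∂μ‖ ^ 2)) μ :=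
    (Finset.aemeasurable_fun_sum _ fun m _ =>
      (hGm m).norm.aemeasurable.pow_const 2).sqrt.aestronglyMeasurable
  have avg_nonneg : 0 ≤ ⨍ x, √(∑ m, ‖G m x - ⨍ y, G m y ∂μ‖ ^ 2) ∂μ :=
    integral_nonneg fun x => Real.sqrt_nonneg _
  refine le_of_sq_le_sq ((ENNReal.ofReal_le_ofReal_iff (by positivity)).1 ?_) (by positivity)
  refine (ENNReal.mul_le_mul_iff_right (Measure.measure_univ_ne_zero.2 hμ)
    (measure_ne_top μ univ)).1 ?_
  calc
    _ = μ univ * ‖⨍ x, √(∑ m, ‖G m x - ⨍ y, G m y ∂μ‖ ^ 2) ∂μ‖ₑ ^ 2 := by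
      rw [Real.enorm_of_nonneg avg_nonneg, ENNReal.ofReal_pow avg_nonneg]
    _ ≤ ∫⁻ x, ∑ m, ‖G m x - ⨍ y, G m y ∂μ‖ₑ ^ 2 ∂μ := by
      simpa only [enorm_sqrt_sum_sq] using measure_univ_mul_enorm_average_sq_le hH
    _ ≤ 4 * ∑ m, ∫⁻ x, ‖G m x - c m‖ₑ ^ 2 ∂μ := by
      rw [lintegral_finsetSum' _ fun m _ => hmeas m, Finset.mul_sum]
      exact Finset.sum_le_sum fun m _ => lintegral_enorm_sub_average_sq_le (hG m) (c m)
    _ ≤ 4 * (ENNReal.ofReal (D ^ 2) * μ univ) := by gcongr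
    _ = μ univ * ENNReal.ofReal ((2 * D) ^ 2) := by
      rw [mul_pow, ENNReal.ofReal_mul (by norm_num), ← mul_assoc, mul_comm]
      norm_num

end MeanSquare

section Plancherel

variable {V F : Type*} [NormedAddCommGroup V] [InnerProductSpace ℝ V] [MeasurableSpace V]
  [BorelSpace V] [FiniteDimensional ℝ V] [NormedAddCommGroup F]

theorem integral_fourier_smul_eq [NormedSpace ℂ F] [CompleteSpace F] {f : V → ℂ} {g : V → F}
    (hf : Integrable f) (hg : Integrable g) : ∫ ξ, 𝓕 f ξ • g ξ = ∫ x, f x • 𝓕 g x := by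
  have := VectorFourier.integral_fourierIntegral_smul_eq_flip (L := innerₗ V)
    Real.continuous_fourierChar continuous_inner hf hg
  simp only [flip_innerₗ] at this
  exact this

theorem fourier_continuous [NormedSpace ℂ F] {f : V → F} (hf : Integrable f) :
    Continuous (𝓕 f) :=
  VectorFourier.fourierIntegral_continuous Real.continuous_fourierChar continuous_inner hf

variable [InnerProductSpace ℂ F] [CompleteSpace F]

theorem fourier_toLp_ae_eq {f : V → F} (h1 : Integrable f) (h2 : MemLp f 2) :
    (𝓕 (h2.toLp f) : Lp F 2 (volume : Measure V)) =ᵐ[volume] 𝓕 f := by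
  refine ae_eq_of_integral_contDiff_smul_eq ((Lp.memLp _).locallyIntegrable one_le_two)
    (fourier_continuous h1).locallyIntegrable fun g hg hgs => ?_
  let G : SchwartzMap V ℂ := HasCompactSupport.toSchwartzMap (f := fun x => (g x : ℂ))
    (hgs.comp_left (g := fun r : ℝ => (r : ℂ)) Complex.ofReal_zero)
    (Complex.ofRealCLM.contDiff.comp hg)
  have hG : ∀ x (y : F), g x • y = G x • y := fun x y => (Complex.coe_smul (g x) y).symm
  have hflip := congrArg (fun T => T G) (Lp.fourier_toTemperedDistribution_eq (h2.toLp f))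
  simp only [TemperedDistribution.fourier_apply, Lp.toTemperedDistribution_apply] at hflip
  simp only [hG]
  rw [← hflip, ← integral_fourier_smul_eq G.integrable h1]
  refine integral_congr_ae ?_
  filter_upwards [h2.coeFn_toLp] with x hx
  rw [hx, SchwartzMap.fourier_coe]

theorem lintegral_enorm_fourier_sq {f : V → F} (h1 : Integrable f) (h2 : MemLp f 2) :
    ∫⁻ ξ, ‖𝓕 f ξ‖ₑ ^ 2 = ∫⁻ x, ‖f x‖ₑ ^ 2 := by
  rw [← eLpNorm_two_sq, ← eLpNorm_two_sq, ← eLpNorm_congr_ae (fourier_toLp_ae_eq h1 h2),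
    ← Lp.enorm_def, ← ofReal_norm, Lp.norm_fourier_eq, ofReal_norm, Lp.enorm_def,
    eLpNorm_congr_ae h2.coeFn_toLp]

end Plancherel

section LargeSieve

theorem enorm_sq_le_lintegral_add_lintegral_deriv {E : Type*} [NormedAddCommGroup E]
    [NormedSpace ℝ E] [CompleteSpace E] {F F' : ℝ → E} {p q a : ℝ} (hpq : p < q)
    (ha : a ∈ Icc p q) (hF : ∀ x ∈ Icc p q, HasDerivAt F (F' x) x)
    (hF' : ContinuousOn F' (Icc p q)) :
    ‖F a‖ₑ ^ 2 ≤ ENNReal.ofReal (2 / (q - p)) * (∫⁻ x in Ioc p q, ‖F x‖ₑ ^ 2) +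
      ENNReal.ofReal (2 * (q - p)) * ∫⁻ x in Ioc p q, ‖F' x‖ₑ ^ 2 := by
  set A := ∫⁻ x in Ioc p q, ‖F x‖ₑ ^ 2
  set A' := ∫⁻ x in Ioc p q, ‖F' x‖ₑ ^ 2
  have hlen : ENNReal.ofReal (q - p) ≠ 0 := by simpa using hpq
  have increment_le : ∀ x ∈ Ioc p q, ‖F x - F a‖ₑ ^ 2 ≤ ENNReal.ofReal (q - p) * A' := by
    intro x hx
    have hsub : uIcc a x ⊆ Icc p q := uIcc_subset_Icc ha (Ioc_subset_Icc_self hx)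
    rw [← intervalIntegral.integral_eq_sub_of_hasDerivAt (fun y hy => hF y (hsub hy))
      (hF'.mono hsub).intervalIntegrable]
    calc ‖∫ y in a..x, F' y‖ₑ ^ 2
        ≤ (∫⁻ y in Ioc p q, ‖F' y‖ₑ) ^ 2 := by
          gcongr
          rw [← enorm_norm, intervalIntegral.norm_intervalIntegral_eq, enorm_norm]
          exact (enorm_integral_le_lintegral_enorm _).trans
            (lintegral_mono_set (Ioc_subset_Ioc (le_min ha.1 hx.1.le) (max_le ha.2 hx.2)))
      _ ≤ _ := by
          simpa using lintegral_sq_le (μ := volume.restrict (Ioc p q)) (g := fun y => ‖F' y‖ₑ)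
            ((hF'.mono Ioc_subset_Icc_self).aestronglyMeasurable measurableSet_Ioc).enorm
  have pointwise : ∀ x ∈ Ioc p q,
      ‖F a‖ₑ ^ 2 ≤ 2 * (‖F x‖ₑ ^ 2 + ENNReal.ofReal (q - p) * A') := by
    intro x hx
    have := enorm_sub_sq_le (F x) (F x - F a)
    rw [sub_sub_cancel] at this
    exact this.trans (by gcongr; exact increment_le x hx)
  have integrated : ENNReal.ofReal (q - p) * ‖F a‖ₑ ^ 2 ≤
      2 * (A + ENNReal.ofReal (q - p) * (ENNReal.ofReal (q - p) * A')) := by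
    have := setLIntegral_mono' (μ := volume) measurableSet_Ioc pointwise
    rwa [setLIntegral_const, lintegral_const_mul' _ _ ENNReal.ofNat_ne_top,
      lintegral_add_right _ measurable_const, setLIntegral_const, Real.volume_Ioc, mul_comm,
      mul_comm _ (ENNReal.ofReal (q - p))] at this
  refine (ENNReal.mul_le_mul_iff_right hlen ENNReal.ofReal_ne_top).1 (integrated.trans_eq ?_)
  rw [div_eq_mul_inv, ENNReal.ofReal_mul zero_le_two, ENNReal.ofReal_mul zero_le_two,
    ENNReal.ofReal_inv_of_pos (sub_pos.2 hpq), ENNReal.ofReal_ofNat]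
  calc _ = 2 * (ENNReal.ofReal (q - p) * (ENNReal.ofReal (q - p))⁻¹) * A +
        2 * (ENNReal.ofReal (q - p) * (ENNReal.ofReal (q - p) * A')) := by
        rw [ENNReal.mul_inv_cancel hlen ENNReal.ofReal_ne_top]; ring
    _ = _ := by ring

theorem sum_setLIntegral_le {ι α : Type*} [MeasurableSpace α] {μ : Measure α} {s : Finset ι}
    {A : ι → Set α} (hA : ∀ i ∈ s, MeasurableSet (A i))
    (hd : (s : Set ι).PairwiseDisjoint A) (g : α → ℝ≥0∞) :
    ∑ i ∈ s, ∫⁻ x in A i, g x ∂μ ≤ ∫⁻ x, g x ∂μ := by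
  rw [← lintegral_biUnion_finset hd hA]
  exact setLIntegral_le_lintegral _ _

theorem sum_enorm_sq_le_lintegral_add_lintegral_deriv {ι E : Type*} [NormedAddCommGroup E]
    [NormedSpace ℝ E] [CompleteSpace E] {F F' : ℝ → E} (hF : ∀ x, HasDerivAt F (F' x) x)
    (hF' : Continuous F') {S : Finset ι} {a : ι → ℝ} {δ : ℝ} (hδ : 0 < δ)
    (hd : (S : Set ι).PairwiseDisjoint fun m => Ioc (a m) (a m + δ)) :
    ∑ m ∈ S, ‖F (a m)‖ₑ ^ 2 ≤ ENNReal.ofReal (2 / δ) * (∫⁻ x, ‖F x‖ₑ ^ 2) +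
      ENNReal.ofReal (2 * δ) * ∫⁻ x, ‖F' x‖ₑ ^ 2 := by
  calc ∑ m ∈ S, ‖F (a m)‖ₑ ^ 2
      ≤ ∑ m ∈ S, (ENNReal.ofReal (2 / δ) * (∫⁻ x in Ioc (a m) (a m + δ), ‖F x‖ₑ ^ 2) +
          ENNReal.ofReal (2 * δ) * ∫⁻ x in Ioc (a m) (a m + δ), ‖F' x‖ₑ ^ 2) := by
        refine Finset.sum_le_sum fun m _ => ?_
        simpa only [add_sub_cancel_left] using enorm_sq_le_lintegral_add_lintegral_deriv
          (lt_add_of_pos_right (a m) hδ) (left_mem_Icc.2 (le_add_of_nonneg_right hδ.le))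
          (fun x _ => hF x) hF'.continuousOn
    _ ≤ _ := by
        rw [Finset.sum_add_distrib, ← Finset.mul_sum, ← Finset.mul_sum]
        gcongr <;> exact sum_setLIntegral_le (fun _ _ => measurableSet_Ioc) hd _

variable {F : Type*} [NormedAddCommGroup F] [InnerProductSpace ℂ F] [CompleteSpace F]

theorem sum_enorm_fourier_sq_le {ι : Type*} {S : Finset ι} {a : ι → ℝ} {δ : ℝ} (hδ : 0 < δ)
    (hd : (S : Set ι).PairwiseDisjoint fun m => Ioc (a m) (a m + δ)) {h : ℝ → F}
    (h1 : Integrable h) (h2 : MemLp h 2) (ht1 : Integrable fun t : ℝ => t • h t)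
    (ht2 : MemLp (fun t : ℝ => t • h t) 2) :
    ∑ m ∈ S, ‖𝓕 h (a m)‖ₑ ^ 2 ≤
      ∫⁻ t, ENNReal.ofReal (2 / δ + 8 * π ^ 2 * δ * t ^ 2) * ‖h t‖ₑ ^ 2 := by
  set h' : ℝ → F := fun t => (-2 * π * Complex.I * t) • h t with h'_def
  have h'_eq : h' = (-2 * π * Complex.I) • fun t : ℝ => t • h t := by
    ext t
    simp only [h'_def, Pi.smul_apply, mul_smul, Complex.coe_smul]
  have h'1 : Integrable h' := h'_eq ▸ ht1.smul (-2 * π * Complex.I)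
  have h'2 : MemLp h' 2 := h'_eq ▸ ht2.const_smul (-2 * π * Complex.I)
  have enorm_h' : ∀ t, ‖h' t‖ₑ ^ 2 = ENNReal.ofReal (4 * π ^ 2 * t ^ 2) * ‖h t‖ₑ ^ 2 := by
    intro t
    rw [h'_def, enorm_smul, mul_pow, ← ofReal_norm, ← ENNReal.ofReal_pow (norm_nonneg _)]
    simp [abs_of_pos pi_pos, mul_pow]
    norm_num
  have sieve := sum_enorm_sq_le_lintegral_add_lintegral_deriv
    (fun ξ => Real.hasDerivAt_fourier h1 ht1 ξ) (fourier_continuous h'1) hδ hd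
  rw [lintegral_enorm_fourier_sq h1 h2, lintegral_enorm_fourier_sq h'1 h'2] at sieve
  refine sieve.trans_eq ?_
  rw [← lintegral_const_mul' _ _ ENNReal.ofReal_ne_top,
    ← lintegral_const_mul' _ _ ENNReal.ofReal_ne_top,
    ← lintegral_add_left' ((h1.aestronglyMeasurable.enorm.pow_const 2).const_mul _)]
  congr with t
  rw [enorm_h', ← mul_assoc, ← ENNReal.ofReal_mul (by positivity), ← add_mul,
    ← ENNReal.ofReal_add (by positivity) (by positivity)]
  ring_nf

end LargeSieve

section BMO

variable {E : Type*} [NormedAddCommGroup E] [NormedSpace ℝ E]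

/-- `IsBMOWith K f`: the function `f` has bounded mean oscillation on the line, with seminorm at
most `K`. The constant lives in `ℝ≥0∞` because all oscillations are measured by lower integrals. -/
structure IsBMOWith (K : ℝ≥0∞) (f : ℝ → E) : Prop where
  locallyIntegrable : LocallyIntegrable f
  oscillation_le : ∀ ⦃u v : ℝ⦄, u < v →
    ∫⁻ x in Ioc u v, ‖f x - ⨍ r in u..v, f r‖ₑ ≤ K * ENNReal.ofReal (v - u)

theorem IsBMOWith.of_average_le {f : ℝ → E} (hf : LocallyIntegrable f) {K : ℝ}
    (h : ∀ u v : ℝ, u < v → ⨍ x in u..v, ‖f x - ⨍ r in u..v, f r‖ ≤ K) :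
    IsBMOWith (ENNReal.ofReal K) f where
  locallyIntegrable := hf
  oscillation_le u v huv := by
    have hint : Integrable (fun x => f x - ⨍ r in u..v, f r) (volume.restrict (Ioc u v)) :=
      ((hf.integrableOn_isCompact isCompact_Icc).mono_set Ioc_subset_Icc_self).sub
        (integrable_const _)
    have hlen := sub_pos.2 huv
    have := h u v huv
    rw [interval_average_eq, smul_eq_mul, inv_mul_le_iff₀ hlen, mul_comm,
      intervalIntegral.integral_of_le huv.le] at this
    rw [← ofReal_integral_norm_eq_lintegral_enorm hint, ← ENNReal.ofReal_mul' hlen.le]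
    exact ENNReal.ofReal_le_ofReal this

/-- The conditional expectation of `f` on `(u, v]` with respect to the `n`-th dyadic subdivision
of that interval: at `x` it is the average of `f` over the cell containing `x`. -/
noncomputable def dyadicAverage (f : ℝ → E) : ℕ → ℝ → ℝ → ℝ → E
  | 0, u, v, _ => ⨍ r in u..v, f r
  | n + 1, u, v, x =>
    if x ≤ (u + v) / 2 then dyadicAverage f n u ((u + v) / 2) x
    else dyadicAverage f n ((u + v) / 2) v x

theorem stronglyMeasurable_dyadicAverage (f : ℝ → E) (n : ℕ) (u v : ℝ) :
    StronglyMeasurable (dyadicAverage f n u v) := by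
  induction n generalizing u v with
  | zero => exact stronglyMeasurable_const
  | succ n ih => exact StronglyMeasurable.ite measurableSet_Iic (ih _ _) (ih _ _)

theorem setLIntegral_Ioc_add_Ioc (g : ℝ → ℝ≥0∞) {u w v : ℝ} (huw : u ≤ w) (hwv : w ≤ v) :
    (∫⁻ x in Ioc u w, g x) + ∫⁻ x in Ioc w v, g x = ∫⁻ x in Ioc u v, g x := by
  rw [← Ioc_union_Ioc_eq_Ioc huw hwv,
    lintegral_union measurableSet_Ioc (Ioc_disjoint_Ioc_of_le le_rfl)]

theorem setLIntegral_dyadicAverage_succ (f : ℝ → E) (g : E → ℝ≥0∞) (n : ℕ) {u v : ℝ}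
    (huv : u < v) :
    ∫⁻ x in Ioc u v, g (dyadicAverage f (n + 1) u v x) =
      (∫⁻ x in Ioc u ((u + v) / 2), g (dyadicAverage f n u ((u + v) / 2) x)) +
        ∫⁻ x in Ioc ((u + v) / 2) v, g (dyadicAverage f n ((u + v) / 2) v x) := by
  rw [← setLIntegral_Ioc_add_Ioc _ (by linarith : u ≤ (u + v) / 2) (by linarith)]
  congr 1 <;> refine setLIntegral_congr_fun measurableSet_Ioc fun x hx => ?_
  · simp only [dyadicAverage, hx.2, if_true]
  · simp only [dyadicAverage, not_le.2 hx.1, if_false]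

theorem exists_dyadicAverage_eq_setAverage_closedBall (f : ℝ → E) (n : ℕ) {u v x : ℝ}
    (hx : x ∈ Ioc u v) :
    ∃ w, x ∈ Metric.closedBall w ((v - u) / 2 / 2 ^ n) ∧
      dyadicAverage f n u v x = ⨍ r in Metric.closedBall w ((v - u) / 2 / 2 ^ n), f r := by
  induction n generalizing u v with
  | zero =>
    refine ⟨(u + v) / 2, ?_, ?_⟩ <;> rw [Real.closedBall_eq_Icc] <;>
      rw [show (u + v) / 2 - (v - u) / 2 / 2 ^ 0 = u by ring,
        show (u + v) / 2 + (v - u) / 2 / 2 ^ 0 = v by ring]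
    · exact Ioc_subset_Icc_self hx
    · rw [dyadicAverage, uIoc_of_le (hx.1.le.trans hx.2), setAverage_congr Ioc_ae_eq_Icc]
  | succ n ih =>
    by_cases h : x ≤ (u + v) / 2
    · obtain ⟨w, hw⟩ := ih ⟨hx.1, h⟩
      rw [show ((u + v) / 2 - u) / 2 / 2 ^ n = (v - u) / 2 / 2 ^ (n + 1) by ring] at hw
      exact ⟨w, by simpa only [dyadicAverage, h, if_true] using hw⟩
    · obtain ⟨w, hw⟩ := ih ⟨not_le.1 h, hx.2⟩
      rw [show (v - (u + v) / 2) / 2 / 2 ^ n = (v - u) / 2 / 2 ^ (n + 1) by ring] at hw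
      exact ⟨w, by simpa only [dyadicAverage, h, if_false] using hw⟩

variable [CompleteSpace E]

theorem ae_tendsto_dyadicAverage {f : ℝ → E} (hf : LocallyIntegrable f) (u v : ℝ) :
    ∀ᵐ x ∂volume.restrict (Ioc u v),
      Filter.Tendsto (fun n => dyadicAverage f n u v x) Filter.atTop (nhds (f x)) := by
  rw [ae_restrict_iff' measurableSet_Ioc]
  filter_upwards [IsUnifLocDoublingMeasure.ae_tendsto_average volume hf 1] with x hx hxI
  choose w hmem heq using fun n => exists_dyadicAverage_eq_setAverage_closedBall f n hxI
  have hr : 0 < (v - u) / 2 := by linarith [hxI.1, hxI.2]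
  have radius_tendsto : Filter.Tendsto (fun n : ℕ => (v - u) / 2 / 2 ^ n) Filter.atTop
      (nhdsWithin 0 (Ioi 0)) := by
    refine tendsto_nhdsWithin_iff.2 ⟨?_, .of_forall fun n => mem_Ioi.2 (by positivity)⟩
    exact tendsto_const_nhds.div_atTop (tendsto_pow_atTop_atTop_of_one_lt one_lt_two)
  simp only [heq]
  exact hx w _ radius_tendsto (.of_forall fun n => by simpa only [one_mul] using hmem n)

theorem ofReal_mul_enorm_average_sub_le {f : ℝ → E} (hf : LocallyIntegrable f) {u v : ℝ}
    (huv : u ≤ v) (c : E) :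
    ENNReal.ofReal (v - u) * ‖(⨍ r in u..v, f r) - c‖ₑ ≤ ∫⁻ x in Ioc u v, ‖f x - c‖ₑ := by
  have hint : IntegrableOn f (Ioc u v) :=
    (hf.integrableOn_isCompact isCompact_Icc).mono_set Ioc_subset_Icc_self
  simpa only [Measure.restrict_apply_univ, Real.volume_Ioc, uIoc_of_le huv] using
    measure_univ_mul_enorm_average_sub_le hint c

theorem enorm_average_half_sub_le {f : ℝ → E} (hf : LocallyIntegrable f) {u v u' v' : ℝ}
    (hlt : u' < v') (hu : u ≤ u') (hv : v' ≤ v) (hhalf : v - u = 2 * (v' - u')) {c : E}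
    {L : ℝ≥0∞} (hL : ∫⁻ x in Ioc u v, ‖f x - c‖ₑ ≤ L * ENNReal.ofReal (v - u)) :
    ‖(⨍ r in u'..v', f r) - c‖ₑ ≤ 2 * L := by
  have hlen : ENNReal.ofReal (v' - u') ≠ 0 := by simpa using hlt
  refine (ENNReal.mul_le_mul_iff_right hlen ENNReal.ofReal_ne_top).1 ?_
  calc ENNReal.ofReal (v' - u') * ‖(⨍ r in u'..v', f r) - c‖ₑ
      ≤ ∫⁻ x in Ioc u' v', ‖f x - c‖ₑ := ofReal_mul_enorm_average_sub_le hf hlt.le c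
    _ ≤ ∫⁻ x in Ioc u v, ‖f x - c‖ₑ := lintegral_mono_set (Ioc_subset_Ioc hu hv)
    _ ≤ L * ENNReal.ofReal (2 * (v' - u')) := by rwa [hhalf] at hL
    _ = ENNReal.ofReal (v' - u') * (2 * L) := by
        rw [ENNReal.ofReal_mul zero_le_two, ENNReal.ofReal_ofNat]; ring

namespace IsBMOWith

variable {K : ℝ≥0∞} {f : ℝ → E}

/- The stopping-time argument of John and Nirenberg in inductive form: as long as the oscillation
about `c` is below `4K` the two halves inherit the hypothesis; otherwise `c` is replaced by the
average over `(u, v]`, and the large oscillation pays for the change of constant. -/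
theorem lintegral_dyadicAverage_sub_sq_le (hf : IsBMOWith K f) (n : ℕ) {u v : ℝ} (huv : u < v)
    {c : E} (hc : ‖(⨍ r in u..v, f r) - c‖ₑ ≤ 8 * K) :
    ∫⁻ x in Ioc u v, ‖dyadicAverage f n u v x - c‖ₑ ^ 2 ≤
      64 * K * ∫⁻ x in Ioc u v, ‖f x - c‖ₑ := by
  induction n generalizing u v c with
  | zero =>
    simp only [dyadicAverage]
    rw [setLIntegral_const, Real.volume_Ioc]
    calc _ = ‖(⨍ r in u..v, f r) - c‖ₑ *
          (ENNReal.ofReal (v - u) * ‖(⨍ r in u..v, f r) - c‖ₑ) := by ring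
      _ ≤ 64 * K * ∫⁻ x in Ioc u v, ‖f x - c‖ₑ := by
        gcongr
        · exact hc.trans (by gcongr; norm_num)
        · exact ofReal_mul_enorm_average_sub_le hf.locallyIntegrable huv.le c
  | succ n ih =>
    have small_oscillation : ∀ d : E,
        ∫⁻ x in Ioc u v, ‖f x - d‖ₑ ≤ 4 * K * ENNReal.ofReal (v - u) →
        ∫⁻ x in Ioc u v, ‖dyadicAverage f (n + 1) u v x - d‖ₑ ^ 2 ≤
          64 * K * ∫⁻ x in Ioc u v, ‖f x - d‖ₑ := by
      intro d hd
      have half := fun {u' v' : ℝ} (hlt : u' < v') (hu : u ≤ u') (hv : v' ≤ v)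
          (hhalf : v - u = 2 * (v' - u')) => ih hlt (c := d) <|
        (enorm_average_half_sub_le hf.locallyIntegrable hlt hu hv hhalf hd).trans_eq (by ring)
      rw [setLIntegral_dyadicAverage_succ f (fun y => ‖y - d‖ₑ ^ 2) n huv,
        ← setLIntegral_Ioc_add_Ioc (fun x => ‖f x - d‖ₑ) (by linarith : u ≤ (u + v) / 2)
          (by linarith), mul_add]
      gcongr <;> apply half <;> linarith
    by_cases h : ∫⁻ x in Ioc u v, ‖f x - c‖ₑ ≤ 4 * K * ENNReal.ofReal (v - u)
    · exact small_oscillation c h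
    set avg := ⨍ r in u..v, f r
    have hosc := hf.oscillation_le huv
    have recentred : ∫⁻ x in Ioc u v, ‖dyadicAverage f (n + 1) u v x - avg‖ₑ ^ 2 ≤
        64 * K * (K * ENNReal.ofReal (v - u)) := by
      refine (small_oscillation avg (hosc.trans ?_)).trans (by gcongr)
      gcongr
      exact le_mul_of_one_le_left' (by norm_num)
    calc ∫⁻ x in Ioc u v, ‖dyadicAverage f (n + 1) u v x - c‖ₑ ^ 2
        ≤ 2 * ((∫⁻ x in Ioc u v, ‖dyadicAverage f (n + 1) u v x - avg‖ₑ ^ 2) +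
            ENNReal.ofReal (v - u) * ‖avg - c‖ₑ ^ 2) := by
          simpa only [Measure.restrict_apply_univ, Real.volume_Ioc] using
            lintegral_enorm_sub_const_sq_le (μ := volume.restrict (Ioc u v)) _ c avg
      _ ≤ 2 * (64 * K * (K * ENNReal.ofReal (v - u)) + ENNReal.ofReal (v - u) * (8 * K) ^ 2) := by
          gcongr
      _ = 64 * K * (4 * K * ENNReal.ofReal (v - u)) := by ring
      _ ≤ 64 * K * ∫⁻ x in Ioc u v, ‖f x - c‖ₑ := by gcongr; exact (not_le.1 h).le

theorem lintegral_sub_average_sq_le (hf : IsBMOWith K f) {u v : ℝ} (huv : u < v) :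
    ∫⁻ x in Ioc u v, ‖f x - ⨍ r in u..v, f r‖ₑ ^ 2 ≤ 64 * K ^ 2 * ENNReal.ofReal (v - u) := by
  set avg := ⨍ r in u..v, f r
  have dyadic_le : ∀ n, ∫⁻ x in Ioc u v, ‖dyadicAverage f n u v x - avg‖ₑ ^ 2 ≤
      64 * K ^ 2 * ENNReal.ofReal (v - u) := fun n =>
    calc ∫⁻ x in Ioc u v, ‖dyadicAverage f n u v x - avg‖ₑ ^ 2
        ≤ 64 * K * ∫⁻ x in Ioc u v, ‖f x - avg‖ₑ :=
          hf.lintegral_dyadicAverage_sub_sq_le n huv (by simp [avg])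
      _ ≤ 64 * K * (K * ENNReal.ofReal (v - u)) := by gcongr; exact hf.oscillation_le huv
      _ = 64 * K ^ 2 * ENNReal.ofReal (v - u) := by ring
  calc ∫⁻ x in Ioc u v, ‖f x - avg‖ₑ ^ 2
      = ∫⁻ x in Ioc u v,
          Filter.liminf (fun n => ‖dyadicAverage f n u v x - avg‖ₑ ^ 2) Filter.atTop := by
        refine lintegral_congr_ae ?_
        filter_upwards [ae_tendsto_dyadicAverage hf.locallyIntegrable u v] with x hx
        exact (((ENNReal.continuous_pow 2).tendsto _).comp (hx.sub_const avg).enorm).liminf_eq.symm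
    _ ≤ Filter.liminf (fun n => ∫⁻ x in Ioc u v, ‖dyadicAverage f n u v x - avg‖ₑ ^ 2)
          Filter.atTop :=
        lintegral_liminf_le fun n => ((stronglyMeasurable_dyadicAverage f n u v).sub
          stronglyMeasurable_const).enorm.pow_const 2
    _ ≤ 64 * K ^ 2 * ENNReal.ofReal (v - u) :=
        Filter.liminf_le_of_le (by isBoundedDefault) fun b hb =>
          (hb.exists.elim fun n hn => hn.trans (dyadic_le n))

end IsBMOWith

end BMO

section WeightedL2

/-- Membership in the weighted space `L²((1 + |t|)⁻² dt)`, in which BMO functions modulo constants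
embed and against which kernels decaying like `(1 + |t|)⁻²` can be integrated. -/
def MemWeightedL2 {E : Type*} [NormedAddCommGroup E] [NormedSpace ℝ E] (h : ℝ → E) : Prop :=
  MemLp (fun t : ℝ => (1 + |t|)⁻¹ • h t) 2

theorem lintegral_weight_mul_le_tsum (g : ℝ → ℝ≥0∞) :
    ∫⁻ t, ‖(1 + |t|)⁻¹‖ₑ ^ 2 * g t ≤
      ∑' k : ℕ, 4⁻¹ ^ k * ∫⁻ t in Ioc (-2 ^ (k + 1)) (2 ^ (k + 1)), g t := by
  let shell : ℕ → Set ℝ := fun k => {t | 1 + |t| ∈ Ico (2 ^ k) (2 ^ (k + 1))}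
  have measurableSet_shell : ∀ k, MeasurableSet (shell k) := fun k =>
    measurableSet_Ico.preimage (by fun_prop : Measurable fun t : ℝ => 1 + |t|)
  have iUnion_shell : ⋃ k, shell k = univ := eq_univ_of_forall fun t =>
    mem_iUnion.2 (exists_nat_pow_near (le_add_of_nonneg_right (abs_nonneg t)) one_lt_two)
  have shell_subset : ∀ k, shell k ⊆ Ioc (-2 ^ (k + 1)) (2 ^ (k + 1)) := fun k t ht =>
    Ioo_subset_Ioc_self (abs_lt.1 (by linarith [ht.2]))
  have weight_le : ∀ k, ∀ t ∈ shell k, ‖(1 + |t|)⁻¹‖ₑ ^ 2 ≤ 4⁻¹ ^ k := by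
    intro k t ht
    have hpos : 0 < 1 + |t| := by positivity
    rw [Real.enorm_of_nonneg (by positivity), ENNReal.ofReal_inv_of_pos hpos, ← ENNReal.inv_pow,
      ← ENNReal.inv_pow, ENNReal.inv_le_inv, show (4 : ℝ≥0∞) = 2 ^ 2 by norm_num, pow_right_comm]
    gcongr
    simpa using ENNReal.ofReal_le_ofReal ht.1
  calc ∫⁻ t, ‖(1 + |t|)⁻¹‖ₑ ^ 2 * g t
      = ∫⁻ t in ⋃ k, shell k, ‖(1 + |t|)⁻¹‖ₑ ^ 2 * g t := by
        rw [iUnion_shell, Measure.restrict_univ]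
    _ ≤ ∑' k, ∫⁻ t in shell k, ‖(1 + |t|)⁻¹‖ₑ ^ 2 * g t := lintegral_iUnion_le _ _
    _ ≤ ∑' k, ∫⁻ t in shell k, 4⁻¹ ^ k * g t := by
        exact ENNReal.tsum_le_tsum fun k => setLIntegral_mono' (measurableSet_shell k) fun t ht =>
          mul_le_mul' (weight_le k t ht) le_rfl
    _ ≤ ∑' k, 4⁻¹ ^ k * ∫⁻ t in Ioc (-2 ^ (k + 1)) (2 ^ (k + 1)), g t := by
        gcongr with k
        rw [lintegral_const_mul' _ _ (ENNReal.pow_ne_top (by simp))]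
        gcongr
        exact shell_subset k

variable {E : Type*} [NormedAddCommGroup E] [NormedSpace ℝ E] [CompleteSpace E]

theorem IsBMOWith.enorm_centralAverage_sub_le {K : ℝ≥0∞} {f : ℝ → E} (hf : IsBMOWith K f)
    (k : ℕ) :
    ‖(⨍ r in (-2 ^ (k + 1))..2 ^ (k + 1), f r) - ⨍ r in (-2)..2, f r‖ₑ ≤ 2 * k * K := by
  induction k with
  | zero => simp
  | succ k ih =>
    have hpos : (0 : ℝ) < 2 ^ (k + 1) := by positivity
    have hdouble : (2 : ℝ) ^ (k + 1 + 1) = 2 * 2 ^ (k + 1) := by ring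
    have drift := enorm_average_half_sub_le hf.locallyIntegrable (u' := -2 ^ (k + 1))
      (v' := 2 ^ (k + 1)) (by linarith) (by linarith) (by linarith) (by linarith)
      (hf.oscillation_le (u := -2 ^ (k + 1 + 1)) (v := 2 ^ (k + 1 + 1)) (by linarith))
    rw [← sub_add_sub_cancel _ (⨍ r in (-2 ^ (k + 1))..2 ^ (k + 1), f r)]
    calc _ ≤ _ := enorm_add_le _ _
      _ ≤ 2 * K + 2 * k * K := by
        gcongr
        rwa [← enorm_neg, neg_sub]
      _ = 2 * (k + 1 : ℕ) * K := by push_cast; ring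

theorem IsBMOWith.lintegral_central_sub_sq_le {K : ℝ≥0∞} {f : ℝ → E} (hf : IsBMOWith K f)
    (k : ℕ) :
    ∫⁻ t in Ioc (-2 ^ (k + 1)) (2 ^ (k + 1)), ‖f t - ⨍ r in (-2)..2, f r‖ₑ ^ 2 ≤
      2 ^ k * (512 + 32 * k ^ 2) * K ^ 2 := by
  have hpos : (0 : ℝ) < 2 ^ (k + 1) := by positivity
  have length_eq : ENNReal.ofReal (2 ^ (k + 1) - -2 ^ (k + 1)) = 4 * 2 ^ k := by
    rw [show (2 : ℝ) ^ (k + 1) - -2 ^ (k + 1) = 4 * 2 ^ k by ring,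
      ENNReal.ofReal_mul zero_le_four, ENNReal.ofReal_pow zero_le_two, ENNReal.ofReal_ofNat,
      ENNReal.ofReal_ofNat]
  have recentre := lintegral_enorm_sub_const_sq_le
    (μ := volume.restrict (Ioc (-2 ^ (k + 1)) (2 ^ (k + 1)))) f (⨍ r in (-2)..2, f r)
    (⨍ r in (-2 ^ (k + 1))..2 ^ (k + 1), f r)
  rw [Measure.restrict_apply_univ, Real.volume_Ioc, length_eq] at recentre
  calc _ ≤ _ := recentre
    _ ≤ 2 * (64 * K ^ 2 * (4 * 2 ^ k) + 4 * 2 ^ k * (2 * k * K) ^ 2) := by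
        gcongr
        · exact length_eq ▸ hf.lintegral_sub_average_sq_le (by linarith)
        · exact hf.enorm_centralAverage_sub_le k
    _ = 2 ^ k * (512 + 32 * k ^ 2) * K ^ 2 := by ring

theorem exists_lintegral_weight_smul_sub_average_sq_le :
    ∃ C : ℝ≥0∞, C ≠ ∞ ∧ ∀ {K : ℝ≥0∞} {f : ℝ → E}, IsBMOWith K f →
      ∫⁻ t, ‖(1 + |t|)⁻¹ • (f t - ⨍ r in (-2)..2, f r)‖ₑ ^ 2 ≤ C * K ^ 2 := by
  refine ⟨∑' k : ℕ, ENNReal.ofReal (2⁻¹ ^ k * (512 + 32 * k ^ 2)), ?_, fun {K f} hf => ?_⟩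
  · have hs : Summable fun k : ℕ => (2⁻¹ : ℝ) ^ k * (512 + 32 * k ^ 2) := by
      have h0 := summable_geometric_of_lt_one (r := (2⁻¹ : ℝ)) (by norm_num) (by norm_num)
      have h2 := summable_pow_mul_geometric_of_norm_lt_one (R := ℝ) 2 (r := 2⁻¹) (by norm_num)
      exact ((h0.mul_left 512).add (h2.mul_left 32)).congr fun k => by ring
    exact hs.tsum_ofReal_ne_top
  simp only [enorm_smul, mul_pow]
  refine (lintegral_weight_mul_le_tsum _).trans ?_
  rw [← ENNReal.tsum_mul_right]
  refine ENNReal.tsum_le_tsum fun k => ?_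
  calc _ ≤ 4⁻¹ ^ k * (2 ^ k * (512 + 32 * k ^ 2) * K ^ 2) := by
        gcongr
        exact hf.lintegral_central_sub_sq_le k
    _ = ENNReal.ofReal (2⁻¹ ^ k * (512 + 32 * k ^ 2)) * K ^ 2 := by
        have hhalf : (4⁻¹ : ℝ≥0∞) * 2 = 2⁻¹ := by
          rw [show (4 : ℝ≥0∞) = 2 * 2 by norm_num, ENNReal.mul_inv (by simp) (by simp), mul_assoc,
            ENNReal.inv_mul_cancel two_ne_zero ENNReal.ofNat_ne_top, mul_one]
        rw [ENNReal.ofReal_mul (by positivity), ENNReal.ofReal_add (by positivity) (by positivity),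
          ENNReal.ofReal_mul (by positivity), ENNReal.ofReal_pow (by positivity),
          ENNReal.ofReal_pow (by positivity), ENNReal.ofReal_inv_of_pos two_pos,
          ENNReal.ofReal_natCast]
        simp only [ENNReal.ofReal_ofNat]
        rw [← hhalf, mul_pow]
        ring

end WeightedL2

section CubicDecay

variable {E : Type*} [NormedAddCommGroup E] [NormedSpace ℝ E]

/-- Cubic decay, with a common constant `B`, of a differentiable function and of its derivative:
the quantitative regularity required of the convolution kernels. -/
structure HasCubicDecay (ψ : ℝ → E) (B : ℝ) : Prop where
  differentiable : Differentiable ℝ ψ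
  norm_le : ∀ y, ‖ψ y‖ ≤ B / (1 + |y|) ^ 3
  norm_deriv_le : ∀ y, ‖deriv ψ y‖ ≤ B / (1 + |y|) ^ 3

/-- The function `η` with `d/ds (s ψ(s c)) = η(s c)` for every `c`. -/
noncomputable def dilationDeriv (ψ : ℝ → E) (y : ℝ) : E := ψ y + y • deriv ψ y

/-- The increment between `0` and `x` of the dilated kernel `ψ(s (· - t))`. -/
def dilatedIncrement (ψ : ℝ → E) (s x t : ℝ) : E := ψ (s * (x - t)) - ψ (s * (0 - t))

theorem hasDerivAt_smul_comp_mul {ψ : ℝ → E} (hψ : Differentiable ℝ ψ) (c s : ℝ) :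
    HasDerivAt (fun s : ℝ => s • ψ (s * c)) (dilationDeriv ψ (s * c)) s := by
  have hcomp : HasDerivAt (fun s : ℝ => ψ (s * c)) (c • deriv ψ (s * c)) s :=
    (hψ (s * c)).hasDerivAt.scomp s (hasDerivAt_mul_const c)
  refine ((hasDerivAt_id s).smul hcomp).congr_deriv ?_
  simp only [dilationDeriv, id, one_smul, smul_smul, add_comm]

theorem one_add_abs_mul_min_le {δ s : ℝ} (hδ : 0 < δ) (hs : δ ≤ s) (x t : ℝ) :
    (1 + |t|) * min δ 1 ≤ (1 + |x|) * (1 + |s * (x - t)|) := by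
  have triangle : |t| ≤ |x| + |x - t| := by
    rw [abs_sub_comm]
    linarith [abs_sub_abs_le_abs_sub t x]
  rw [abs_mul, abs_of_pos (hδ.trans_le hs)]
  calc (1 + |t|) * min δ 1 ≤ (1 + |x|) * (1 + |x - t|) * min δ 1 := by
        gcongr
        nlinarith [abs_nonneg x, abs_nonneg (x - t)]
    _ = (1 + |x|) * (min δ 1 + min δ 1 * |x - t|) := by ring
    _ ≤ (1 + |x|) * (1 + s * |x - t|) := by
        gcongr
        · exact min_le_right δ 1
        · exact (min_le_left δ 1).trans hs

theorem one_add_mul_abs_le_of_far {s x t : ℝ} (hx : |x| ≤ 1) (ht : 2 ≤ |t|) (hs : 0 < s) :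
    1 + s * |t| ≤ 2 * (1 + |s * (x - t)|) := by
  have hfar : |t| ≤ 2 * |x - t| := by
    rw [abs_sub_comm]
    linarith [abs_sub_abs_le_abs_sub t x]
  rw [abs_mul, abs_of_pos hs]
  nlinarith

theorem div_cube_le_of_far {B s x t : ℝ} (hB : 0 ≤ B) (hx : |x| ≤ 1) (ht : 2 ≤ |t|) (hs : 0 < s) :
    B / (1 + |s * (x - t)|) ^ 3 ≤ 8 * B / (1 + s * |t|) ^ 3 := by
  have hle := one_add_mul_abs_le_of_far hx ht hs
  calc B / (1 + |s * (x - t)|) ^ 3 ≤ B / ((1 + s * |t|) / 2) ^ 3 := by gcongr; linarith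
    _ = 8 * B / (1 + s * |t|) ^ 3 := by field_simp; norm_num

namespace HasCubicDecay

variable {ψ : ℝ → E} {B : ℝ}

theorem nonneg (h : HasCubicDecay ψ B) : 0 ≤ B := by
  simpa using (norm_nonneg _).trans (h.norm_le 0)

theorem continuous (h : HasCubicDecay ψ B) : Continuous ψ := h.differentiable.continuous

theorem norm_le_const (h : HasCubicDecay ψ B) (y : ℝ) : ‖ψ y‖ ≤ B :=
  (h.norm_le y).trans
    (div_le_self h.nonneg (one_le_pow₀ (le_add_of_nonneg_right (abs_nonneg y))))

theorem norm_comp_mul_sub_le (h : HasCubicDecay ψ B) {δ s : ℝ} (hδ : 0 < δ) (hs : δ ≤ s)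
    (x t : ℝ) : ‖ψ (s * (x - t))‖ ≤ B * ((1 + |x|) / min δ 1) ^ 3 / (1 + |t|) ^ 3 := by
  have hB := h.nonneg
  have hle : (1 + |t|) * min δ 1 / (1 + |x|) ≤ 1 + |s * (x - t)| :=
    div_le_of_le_mul₀ (by positivity) (by positivity)
      (mul_comm (1 + |x|) _ ▸ one_add_abs_mul_min_le hδ hs x t)
  calc ‖ψ (s * (x - t))‖ ≤ B / (1 + |s * (x - t)|) ^ 3 := h.norm_le _
    _ ≤ B / ((1 + |t|) * min δ 1 / (1 + |x|)) ^ 3 := by gcongr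
    _ = B * ((1 + |x|) / min δ 1) ^ 3 / (1 + |t|) ^ 3 := by field_simp

theorem norm_dilatedIncrement_le_const (h : HasCubicDecay ψ B) {s x t : ℝ} (hx : |x| ≤ 1)
    (ht : 2 ≤ |t|) (hs : 0 < s) :
    ‖dilatedIncrement ψ s x t‖ ≤ 16 * B / (1 + s * |t|) ^ 3 :=
  calc ‖dilatedIncrement ψ s x t‖ ≤ 8 * B / (1 + s * |t|) ^ 3 + 8 * B / (1 + s * |t|) ^ 3 :=
        norm_sub_le_of_le ((h.norm_le _).trans (div_cube_le_of_far h.nonneg hx ht hs))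
          ((h.norm_le _).trans (div_cube_le_of_far h.nonneg (by simp) ht hs))
    _ = 16 * B / (1 + s * |t|) ^ 3 := by ring

theorem norm_dilatedIncrement_le_mul (h : HasCubicDecay ψ B) {s x t : ℝ} (hx : |x| ≤ 1)
    (ht : 2 ≤ |t|) (hs : 0 < s) :
    ‖dilatedIncrement ψ s x t‖ ≤ 8 * B / (1 + s * |t|) ^ 3 * s := by
  have hB := h.nonneg
  have hderiv : ∀ y ∈ Icc (-1 : ℝ) 1, HasDerivWithinAt (fun y => ψ (s * (y - t)))
      (s • deriv ψ (s * (y - t))) (Icc (-1) 1) y := fun y _ =>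
    ((h.differentiable _).hasDerivAt.scomp y
      (by simpa using ((hasDerivAt_id y).sub_const t).const_mul s)).hasDerivWithinAt
  have hbound : ∀ y ∈ Icc (-1 : ℝ) 1,
      ‖s • deriv ψ (s * (y - t))‖ ≤ 8 * B / (1 + s * |t|) ^ 3 * s := fun y hy => by
    rw [norm_smul, Real.norm_of_nonneg hs.le, mul_comm]
    gcongr
    exact (h.norm_deriv_le _).trans (div_cube_le_of_far h.nonneg (abs_le.2 hy) ht hs)
  refine ((convex_Icc (-1 : ℝ) 1).norm_image_sub_le_of_norm_hasDerivWithin_le hderiv hbound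
    (by simp : (0 : ℝ) ∈ _) (abs_le.1 hx)).trans ?_
  rw [sub_zero, Real.norm_eq_abs]
  exact mul_le_of_le_one_right (by positivity) hx

theorem norm_dilatedIncrement_le (h : HasCubicDecay ψ B) {s x t : ℝ} (hx : |x| ≤ 1)
    (ht : 2 ≤ |t|) (hs : 0 < s) :
    ‖dilatedIncrement ψ s x t‖ ≤ 16 * B * min s 1 / (1 + s * |t|) ^ 3 := by
  have hB := h.nonneg
  rcases le_total s 1 with hs1 | hs1
  · rw [min_eq_left hs1]
    calc ‖dilatedIncrement ψ s x t‖ ≤ 8 * B / (1 + s * |t|) ^ 3 * s :=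
          h.norm_dilatedIncrement_le_mul hx ht hs
      _ = 8 * B * s / (1 + s * |t|) ^ 3 := by ring
      _ ≤ 16 * B * s / (1 + s * |t|) ^ 3 := by gcongr; norm_num
  · rw [min_eq_right hs1, mul_one]
    exact h.norm_dilatedIncrement_le_const hx ht hs

end HasCubicDecay

theorem two_div_add_mul_sq_le {δ : ℝ} (hδ : 0 < δ) (t : ℝ) :
    2 / δ + 8 * π ^ 2 * δ * t ^ 2 ≤ 80 * δ⁻¹ * (1 + δ * |t|) ^ 2 := by
  have hpi : π ^ 2 ≤ 10 := by nlinarith [Real.pi_lt_d2, Real.pi_pos]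
  have hδt : 0 ≤ δ * |t| := by positivity
  calc 2 / δ + 8 * π ^ 2 * δ * t ^ 2 = δ⁻¹ * (2 + 8 * π ^ 2 * (δ * |t|) ^ 2) := by
        rw [mul_pow, sq_abs]
        field_simp
    _ ≤ δ⁻¹ * (2 + 8 * 10 * (δ * |t|) ^ 2) := by gcongr
    _ ≤ δ⁻¹ * (80 * (1 + δ * |t|) ^ 2) := by
        gcongr
        nlinarith
    _ = 80 * δ⁻¹ * (1 + δ * |t|) ^ 2 := by ring

theorem mul_min_one_sq_mul_le {δ : ℝ} (hδ : 0 < δ) (t : ℝ) (ht : 1 ≤ |t|) :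
    δ * min δ 1 ^ 2 * (1 + |t|) ^ 2 ≤ 4 * min δ δ⁻¹ * (1 + δ * |t|) ^ 2 := by
  have hle : δ * (1 + |t|) ≤ 2 * (1 + δ * |t|) := by nlinarith
  have hsq : (δ * (1 + |t|)) ^ 2 ≤ (2 * (1 + δ * |t|)) ^ 2 := by gcongr
  rcases le_total δ 1 with h | h
  · rw [min_eq_left h, min_eq_left (h.trans ((one_le_inv₀ hδ).2 h))]
    calc δ * δ ^ 2 * (1 + |t|) ^ 2 = δ * (δ * (1 + |t|)) ^ 2 := by ring
      _ ≤ δ * (2 * (1 + δ * |t|)) ^ 2 := by gcongr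
      _ = 4 * δ * (1 + δ * |t|) ^ 2 := by ring
  · rw [min_eq_right h, min_eq_right ((inv_le_one_of_one_le₀ h).trans h)]
    calc δ * 1 ^ 2 * (1 + |t|) ^ 2 = δ⁻¹ * (δ * (1 + |t|)) ^ 2 := by field_simp
      _ ≤ δ⁻¹ * (2 * (1 + δ * |t|)) ^ 2 := by gcongr
      _ = 4 * δ⁻¹ * (1 + δ * |t|) ^ 2 := by ring

theorem HasCubicDecay.norm_smul_dilatedIncrement_le {ψ : ℝ → E} {B : ℝ} (h : HasCubicDecay ψ B)
    {δ s x t : ℝ} (hx : |x| ≤ 1) (ht : 2 ≤ |t|) (hδ : 0 < δ) (hs : s ∈ Icc δ (2 * δ)) :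
    ‖s • dilatedIncrement ψ s x t‖ ≤ 64 * B * δ * min δ 1 / (1 + δ * |t|) ^ 3 := by
  have hB := h.nonneg
  have hs0 : 0 < s := hδ.trans_le hs.1
  have hmin_le : min s 1 ≤ 2 * min δ 1 := by
    rw [mul_min_of_nonneg _ _ zero_le_two]
    exact min_le_min hs.2 (by norm_num)
  rw [norm_smul, Real.norm_of_nonneg hs0.le]
  calc s * ‖dilatedIncrement ψ s x t‖ ≤ s * (16 * B * min s 1 / (1 + s * |t|) ^ 3) := by
        gcongr
        exact h.norm_dilatedIncrement_le hx ht hs0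
    _ ≤ 2 * δ * (16 * B * (2 * min δ 1) / (1 + δ * |t|) ^ 3) := by
        have hsδ := hs.1
        have hs2 := hs.2
        gcongr
    _ = 64 * B * δ * min δ 1 / (1 + δ * |t|) ^ 3 := by ring

theorem HasCubicDecay.sieveWeight_mul_norm_sq_le {ψ : ℝ → E} {B : ℝ} (h : HasCubicDecay ψ B)
    {δ s x t : ℝ} (hx : |x| ≤ 1) (ht : 2 ≤ |t|) (hδ : 0 < δ) (hs : s ∈ Icc δ (2 * δ)) :
    (2 / δ + 8 * π ^ 2 * δ * t ^ 2) * ‖s • dilatedIncrement ψ s x t‖ ^ 2 ≤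
      1310720 * B ^ 2 * min δ δ⁻¹ * ((1 + |t|) ^ 2)⁻¹ := by
  have hp : 1 ≤ 1 + δ * |t| := le_add_of_nonneg_right (by positivity)
  calc (2 / δ + 8 * π ^ 2 * δ * t ^ 2) * ‖s • dilatedIncrement ψ s x t‖ ^ 2
      ≤ 80 * δ⁻¹ * (1 + δ * |t|) ^ 2 * (64 * B * δ * min δ 1 / (1 + δ * |t|) ^ 3) ^ 2 := by
        gcongr
        · exact two_div_add_mul_sq_le hδ t
        · exact h.norm_smul_dilatedIncrement_le hx ht hδ hs
    _ = 327680 * B ^ 2 * (δ * min δ 1 ^ 2 * (1 + |t|) ^ 2) / (1 + δ * |t|) ^ 4 *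
          ((1 + |t|) ^ 2)⁻¹ := by field_simp; ring
    _ ≤ 327680 * B ^ 2 * (4 * min δ δ⁻¹ * (1 + δ * |t|) ^ 2) / (1 + δ * |t|) ^ 4 *
          ((1 + |t|) ^ 2)⁻¹ := by
        gcongr 327680 * B ^ 2 * ?_ / (1 + δ * |t|) ^ 4 * ((1 + |t|) ^ 2)⁻¹
        exact mul_min_one_sq_mul_le hδ t (by linarith)
    _ = 1310720 * B ^ 2 * min δ δ⁻¹ / (1 + δ * |t|) ^ 2 * ((1 + |t|) ^ 2)⁻¹ := by
        field_simp; ring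
    _ ≤ 1310720 * B ^ 2 * min δ δ⁻¹ * ((1 + |t|) ^ 2)⁻¹ := by
        gcongr
        exact div_le_self (by positivity) (one_le_pow₀ hp)

end CubicDecay

section WeightedKernels

theorem memLp_inv_one_add_abs : MemLp (fun t : ℝ => (1 + |t|)⁻¹) 2 := by
  have hc : Continuous fun t : ℝ => (1 + |t|)⁻¹ :=
    (continuous_const.add continuous_abs).inv₀ fun t =>
      (by positivity : 1 + |t| ≠ 0)
  refine (memLp_two_iff_integrable_sq_norm hc.aestronglyMeasurable).2
    (integrable_inv_one_add_sq.mono' (by fun_prop) (.of_forall fun t => ?_))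
  rw [norm_pow, norm_norm, norm_inv, inv_pow, Real.norm_of_nonneg (by positivity)]
  gcongr
  nlinarith [sq_abs t, abs_nonneg t]

theorem MemWeightedL2.aestronglyMeasurable {E : Type*} [NormedAddCommGroup E] [NormedSpace ℝ E]
    {h : ℝ → E} (hh : MemWeightedL2 h) : AEStronglyMeasurable h := by
  have hm : AEStronglyMeasurable fun t : ℝ => (1 + |t|) • (1 + |t|)⁻¹ • h t :=
    (by fun_prop : Continuous fun t : ℝ => 1 + |t|).aestronglyMeasurable.smul hh.1
  exact hm.congr (.of_forall fun t => smul_inv_smul₀ (by positivity) _)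

variable {A : Type*} [NormedRing A] [NormedAlgebra ℝ A] {h κ : ℝ → A} {M : ℝ}

theorem norm_mul_le_weight_mul (hκ : ∀ t, ‖κ t‖ ≤ M / (1 + |t|) ^ 2) (t : ℝ) :
    ‖h t * κ t‖ ≤ M * (‖(1 + |t|)⁻¹ • h t‖ * (1 + |t|)⁻¹) := by
  rw [norm_smul, norm_inv, Real.norm_of_nonneg (by positivity)]
  calc ‖h t * κ t‖ ≤ ‖h t‖ * (M / (1 + |t|) ^ 2) := norm_mul_le_of_le le_rfl (hκ t)
    _ = M * ((1 + |t|)⁻¹ * ‖h t‖ * (1 + |t|)⁻¹) := by field_simp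

theorem MemWeightedL2.integrable_mul (hh : MemWeightedL2 h) (hm : AEStronglyMeasurable κ)
    (hκ : ∀ t, ‖κ t‖ ≤ M / (1 + |t|) ^ 2) : Integrable fun t => h t * κ t :=
  ((hh.norm.integrable_mul memLp_inv_one_add_abs).const_mul M).mono'
    (hh.aestronglyMeasurable.mul hm) (.of_forall (norm_mul_le_weight_mul hκ))

theorem MemWeightedL2.memLp_mul (hh : MemWeightedL2 h) (hm : AEStronglyMeasurable κ)
    (hκ : ∀ t, ‖κ t‖ ≤ M / (1 + |t|) ^ 2) : MemLp (fun t => h t * κ t) 2 := by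
  have hM : 0 ≤ M := by simpa using (norm_nonneg _).trans (hκ 0)
  refine (hh.norm.const_mul M).mono (hh.aestronglyMeasurable.mul hm) (.of_forall fun t => ?_)
  rw [Real.norm_of_nonneg (by positivity)]
  refine (norm_mul_le_weight_mul hκ t).trans ?_
  gcongr
  exact mul_le_of_le_one_right (norm_nonneg _)
    (inv_le_one_of_one_le₀ (le_add_of_nonneg_right (abs_nonneg t)))

end WeightedKernels

section ScaleSieve

theorem sum_enorm_fourier_mul_sq_le {ι : Type*} {S : Finset ι} {a : ι → ℝ} {δ : ℝ} (hδ : 0 < δ)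
    (hd : (S : Set ι).PairwiseDisjoint fun m => Ioc (a m) (a m + δ)) {h κ : ℝ → ℂ}
    (hh : MemWeightedL2 h) (hm : AEStronglyMeasurable κ) {M : ℝ}
    (hκ : ∀ t, ‖κ t‖ ≤ M / (1 + |t|) ^ 3) {A : ℝ}
    (hA : ∀ t ∈ support h, (2 / δ + 8 * π ^ 2 * δ * t ^ 2) * ‖κ t‖ ^ 2 ≤ A * ((1 + |t|) ^ 2)⁻¹) :
    ∑ m ∈ S, ‖𝓕 (fun t => h t * κ t) (a m)‖ₑ ^ 2 ≤
      ENNReal.ofReal A * ∫⁻ t, ‖(1 + |t|)⁻¹ • h t‖ₑ ^ 2 := by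
  have hM : 0 ≤ M := by simpa using (norm_nonneg _).trans (hκ 0)
  have hκ2 : ∀ t, ‖κ t‖ ≤ M / (1 + |t|) ^ 2 := fun t => (hκ t).trans (by
    gcongr
    · exact le_add_of_nonneg_right (abs_nonneg t)
    · norm_num)
  have htκ : ∀ t : ℝ, ‖t • κ t‖ ≤ M / (1 + |t|) ^ 2 := fun t => by
    rw [norm_smul, Real.norm_eq_abs]
    calc |t| * ‖κ t‖ ≤ (1 + |t|) * (M / (1 + |t|) ^ 3) := by
          gcongr
          · exact le_add_of_nonneg_left zero_le_one
          · exact hκ t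
      _ = M / (1 + |t|) ^ 2 := by field_simp
  have hmt : AEStronglyMeasurable fun t : ℝ => t • κ t := aestronglyMeasurable_id.smul hm
  refine (sum_enorm_fourier_sq_le hδ hd (hh.integrable_mul hm hκ2) (hh.memLp_mul hm hκ2)
    (by simpa only [mul_smul_comm] using hh.integrable_mul hmt htκ)
    (by simpa only [mul_smul_comm] using hh.memLp_mul hmt htκ)).trans ?_
  rw [← lintegral_const_mul' _ _ ENNReal.ofReal_ne_top]
  refine lintegral_mono fun t => ?_
  by_cases ht : h t = 0
  · simp [ht]
  have hAt := ENNReal.ofReal_le_ofReal (hA t ht)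
  rw [ENNReal.ofReal_mul (by positivity), ENNReal.ofReal_mul' (by positivity),
    ENNReal.ofReal_pow (norm_nonneg _), ofReal_norm, ← inv_pow,
    ENNReal.ofReal_pow (by positivity)] at hAt
  rw [enorm_mul, enorm_smul, Real.enorm_of_nonneg (by positivity : 0 ≤ (1 + |t|)⁻¹), mul_pow,
    mul_pow, mul_left_comm, mul_comm (ENNReal.ofReal _ ^ 2), mul_left_comm (ENNReal.ofReal A)]
  gcongr

theorem sum_enorm_sq_le_of_forall_sum_enorm_sq_le {ι E : Type*} [NormedAddCommGroup E]
    [NormedSpace ℝ E] [CompleteSpace E] {S : Finset ι} {F F' : ι → ℝ → E} {p q : ℝ} {a : ι → ℝ}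
    {M M' : ℝ≥0∞} (hpq : p < q) (ha : ∀ m ∈ S, a m ∈ Icc p q)
    (hF : ∀ m ∈ S, ∀ x ∈ Icc p q, HasDerivAt (F m) (F' m x) x)
    (hF' : ∀ m ∈ S, ContinuousOn (F' m) (Icc p q))
    (hM : ∀ x ∈ Icc p q, ∑ m ∈ S, ‖F m x‖ₑ ^ 2 ≤ M)
    (hM' : ∀ x ∈ Icc p q, ENNReal.ofReal ((q - p) ^ 2) * ∑ m ∈ S, ‖F' m x‖ₑ ^ 2 ≤ M') :
    ∑ m ∈ S, ‖F m (a m)‖ₑ ^ 2 ≤ 2 * M + 2 * M' := by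
  have hlen : 0 < q - p := sub_pos.2 hpq
  have hsq : 2 / (q - p) * (q - p) ^ 2 = 2 * (q - p) := by field_simp
  have sum_lintegral_eq : ∀ {G : ι → ℝ → E}, (∀ m ∈ S, ContinuousOn (G m) (Icc p q)) →
      ∑ m ∈ S, ∫⁻ x in Ioc p q, ‖G m x‖ₑ ^ 2 = ∫⁻ x in Ioc p q, ∑ m ∈ S, ‖G m x‖ₑ ^ 2 := fun hG =>
    (lintegral_finsetSum' _ fun m hm => (((hG m hm).mono
      Ioc_subset_Icc_self).aestronglyMeasurable measurableSet_Ioc).enorm.pow_const 2).symm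
  have setLIntegral_le : ∀ {g : ℝ → ℝ≥0∞} {c}, (∀ x ∈ Icc p q, g x ≤ c) →
      ∫⁻ x in Ioc p q, g x ≤ c * ENNReal.ofReal (q - p) := fun hg => by
    simpa only [setLIntegral_const, Real.volume_Ioc] using
      setLIntegral_mono' (μ := volume) measurableSet_Ioc fun x hx => hg x (Ioc_subset_Icc_self hx)
  calc ∑ m ∈ S, ‖F m (a m)‖ₑ ^ 2
      ≤ ∑ m ∈ S, (ENNReal.ofReal (2 / (q - p)) * (∫⁻ x in Ioc p q, ‖F m x‖ₑ ^ 2) +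
          ENNReal.ofReal (2 * (q - p)) * ∫⁻ x in Ioc p q, ‖F' m x‖ₑ ^ 2) :=
        Finset.sum_le_sum fun m hm =>
          enorm_sq_le_lintegral_add_lintegral_deriv hpq (ha m hm) (hF m hm) (hF' m hm)
    _ = ENNReal.ofReal (2 / (q - p)) * (∫⁻ x in Ioc p q, ∑ m ∈ S, ‖F m x‖ₑ ^ 2) +
          ENNReal.ofReal (2 / (q - p)) *
            ∫⁻ x in Ioc p q, ENNReal.ofReal ((q - p) ^ 2) * ∑ m ∈ S, ‖F' m x‖ₑ ^ 2 := by
        rw [Finset.sum_add_distrib, ← Finset.mul_sum, ← Finset.mul_sum, sum_lintegral_eq hF',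
          sum_lintegral_eq fun m hm x hx => (hF m hm x hx).continuousAt.continuousWithinAt,
          lintegral_const_mul' _ _ ENNReal.ofReal_ne_top, ← mul_assoc (ENNReal.ofReal (2 / _)),
          ← ENNReal.ofReal_mul (by positivity), hsq]
    _ ≤ ENNReal.ofReal (2 / (q - p)) * (M * ENNReal.ofReal (q - p)) +
          ENNReal.ofReal (2 / (q - p)) * (M' * ENNReal.ofReal (q - p)) := by
        gcongr
        · exact setLIntegral_le hM
        · exact setLIntegral_le hM'
    _ = 2 * M + 2 * M' := by
        rw [mul_left_comm, mul_left_comm _ M', ← ENNReal.ofReal_mul (by positivity),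
          div_mul_cancel₀ _ hlen.ne', ENNReal.ofReal_ofNat, mul_comm M, mul_comm M']

section Dilations

variable {h ψ : ℝ → ℂ} {B : ℝ}

theorem MemWeightedL2.exists_integrable_norm_mul_dilated_le (hh : MemWeightedL2 h)
    (hψ : HasCubicDecay ψ B) {δ : ℝ} (hδ : 0 < δ) (x : ℝ) :
    ∃ g : ℝ → ℝ, Integrable g ∧ ∀ s, δ ≤ s → ∀ t, ‖h t * ψ (s * (x - t))‖ ≤ g t := by
  have hB := hψ.nonneg
  refine ⟨_, (hh.norm.integrable_mul memLp_inv_one_add_abs).const_mul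
    (B * ((1 + |x|) / min δ 1) ^ 3), fun s hs => norm_mul_le_weight_mul fun t =>
      (hψ.norm_comp_mul_sub_le hδ hs x t).trans ?_⟩
  gcongr
  · exact le_add_of_nonneg_right (abs_nonneg t)
  · norm_num

theorem MemWeightedL2.aestronglyMeasurable_mul_dilated (hh : MemWeightedL2 h)
    (hψ : Continuous ψ) (s x : ℝ) : AEStronglyMeasurable fun t => h t * ψ (s * (x - t)) :=
  hh.aestronglyMeasurable.mul (hψ.comp (by fun_prop)).aestronglyMeasurable

theorem MemWeightedL2.integrable_mul_dilated (hh : MemWeightedL2 h) (hψ : HasCubicDecay ψ B)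
    {s : ℝ} (hs : 0 < s) (x : ℝ) : Integrable fun t => h t * ψ (s * (x - t)) := by
  obtain ⟨g, hg, hle⟩ := hh.exists_integrable_norm_mul_dilated_le hψ hs x
  exact hg.mono' (hh.aestronglyMeasurable_mul_dilated hψ.continuous s x) (.of_forall (hle s le_rfl))

theorem MemWeightedL2.integrable_mul_smul_dilated (hh : MemWeightedL2 h)
    (hψ : HasCubicDecay ψ B) (c : ℝ) {s : ℝ} (hs : 0 < s) (x : ℝ) :
    Integrable fun t => h t * (c • ψ (s * (x - t))) := by
  simpa only [mul_smul_comm, Pi.smul_def] using (hh.integrable_mul_dilated hψ hs x).smul c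

theorem continuousOn_fourier_mul_dilated (hh : MemWeightedL2 h) (hψ : HasCubicDecay ψ B)
    (x ξ : ℝ) : ContinuousOn (fun s => 𝓕 (fun t => h t * ψ (s * (x - t))) ξ) (Ioi 0) := by
  intro s hs
  obtain ⟨g, hg, hle⟩ := hh.exists_integrable_norm_mul_dilated_le hψ (half_pos hs) x
  have hψc := hψ.continuous
  simp only [Real.fourier_real_eq]
  refine (continuousAt_of_dominated (.of_forall fun r => ?_) ?_ hg
    (.of_forall fun t => by fun_prop)).continuousWithinAt
  · exact (by fun_prop : Continuous fun t : ℝ => 𝐞 (-(t * ξ))).aestronglyMeasurable.smul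
      (hh.aestronglyMeasurable_mul_dilated hψc r x)
  · filter_upwards [Ioi_mem_nhds (half_lt_self hs)] with r hr
    exact .of_forall fun t => (Circle.norm_smul _ _).trans_le (hle r (le_of_lt hr) t)

theorem hasDerivAt_fourier_mul_smul_dilated {B' : ℝ} (hh : MemWeightedL2 h)
    (hψ : HasCubicDecay ψ B) (hη : HasCubicDecay (dilationDeriv ψ) B') {s : ℝ} (hs : 0 < s)
    (x ξ : ℝ) :
    HasDerivAt (fun s => 𝓕 (fun t => h t * (s • ψ (s * (x - t)))) ξ)
      (𝓕 (fun t => h t * dilationDeriv ψ (s * (x - t))) ξ) s := by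
  obtain ⟨g, hg, hle⟩ := hh.exists_integrable_norm_mul_dilated_le hη (half_pos hs) x
  have integrable_smul : ∀ {k : ℝ → ℂ}, Integrable k → Integrable fun t => 𝐞 (-inner ℝ t ξ) • k t :=
    (Real.fourierIntegral_convergent_iff ξ).2
  simp only [Real.fourier_eq]
  refine (hasDerivAt_integral_of_dominated_loc_of_deriv_le (Ioi_mem_nhds (half_lt_self hs))
    ?_ (integrable_smul (hh.integrable_mul_smul_dilated hψ s hs x))
    (integrable_smul (hh.integrable_mul_dilated hη hs x)).1
    (.of_forall fun t r hr => (Circle.norm_smul _ _).trans_le (hle r (le_of_lt hr) t)) hg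
    (.of_forall fun t r _ => ?_)).2
  · filter_upwards [Ioi_mem_nhds hs] with r hr
    exact (integrable_smul (hh.integrable_mul_smul_dilated hψ r hr x)).1
  · exact ((hasDerivAt_smul_comp_mul hψ.differentiable (x - t) r).const_mul (h t)).const_smul _

end Dilations

end ScaleSieve

section FarPart

theorem fourier_sub_apply {V F : Type*} [NormedAddCommGroup V] [InnerProductSpace ℝ V]
    [FiniteDimensional ℝ V] [MeasurableSpace V] [BorelSpace V] [NormedAddCommGroup F]
    [NormedSpace ℂ F] {f g : V → F} (hf : Integrable f) (hg : Integrable g) (ξ : V) :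
    𝓕 (fun t => f t - g t) ξ = 𝓕 f ξ - 𝓕 g ξ := by
  simp only [Real.fourier_eq, smul_sub]
  exact integral_sub ((Real.fourierIntegral_convergent_iff ξ).2 hf)
    ((Real.fourierIntegral_convergent_iff ξ).2 hg)

variable {h ψ : ℝ → ℂ} {B x δ : ℝ} {ι : Type*} {S : Finset ι} {a : ι → ℝ}

theorem sum_enorm_fourier_dilated_sub_sq_le (hδ : 0 < δ)
    (hd : (S : Set ι).PairwiseDisjoint fun m => Ioc (a m) (a m + δ)) (hh : MemWeightedL2 h)
    (hfar : ∀ t ∈ support h, 2 ≤ |t|) (hψ : HasCubicDecay ψ B) (hx : |x| ≤ 1) {s : ℝ}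
    (hs : s ∈ Icc δ (2 * δ)) (c : ℝ) :
    ∑ m ∈ S, ‖𝓕 (fun t => h t * (c • ψ (s * (x - t)))) (a m) -
        𝓕 (fun t => h t * (c • ψ (s * (0 - t)))) (a m)‖ₑ ^ 2 ≤
      ENNReal.ofReal ((c / s) ^ 2 * (1310720 * B ^ 2 * min δ δ⁻¹)) *
        ∫⁻ t, ‖(1 + |t|)⁻¹ • h t‖ₑ ^ 2 := by
  have hs0 : 0 < s := hδ.trans_le hs.1
  have hψc := hψ.continuous
  have hdiff : ∀ m, 𝓕 (fun t => h t * (c • ψ (s * (x - t)))) (a m) -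
      𝓕 (fun t => h t * (c • ψ (s * (0 - t)))) (a m) =
        𝓕 (fun t => h t * (c • dilatedIncrement ψ s x t)) (a m) := fun m => by
    rw [← fourier_sub_apply (hh.integrable_mul_smul_dilated hψ c hs0 x)
      (hh.integrable_mul_smul_dilated hψ c hs0 0)]
    simp only [dilatedIncrement, smul_sub, mul_sub]
  simp only [hdiff]
  refine sum_enorm_fourier_mul_sq_le
    (M := |c| * (B * ((1 + |x|) / min δ 1) ^ 3 + B * ((1 + |(0 : ℝ)|) / min δ 1) ^ 3))
    hδ hd hh ?_ (fun t => ?_) fun t ht => ?_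
  · unfold dilatedIncrement
    exact Continuous.aestronglyMeasurable (by fun_prop)
  · rw [norm_smul, Real.norm_eq_abs, mul_div_assoc, add_div]
    gcongr
    exact norm_sub_le_of_le (hψ.norm_comp_mul_sub_le hδ hs.1 x t)
      (hψ.norm_comp_mul_sub_le hδ hs.1 0 t)
  · have hsmul : c • dilatedIncrement ψ s x t = (c / s) • s • dilatedIncrement ψ s x t := by
      rw [smul_smul, div_mul_cancel₀ _ hs0.ne']
    rw [hsmul, norm_smul, mul_pow, Real.norm_eq_abs, sq_abs, mul_left_comm,
      mul_assoc (_ ^ 2)]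
    exact mul_le_mul_of_nonneg_left (hψ.sieveWeight_mul_norm_sq_le hx (hfar t ht) hδ hs)
      (sq_nonneg _)

theorem sum_enorm_fourier_dilated_sub_sq_le_of_comparable {B' : ℝ} {ℓ : ι → ℝ} (hδ : 0 < δ)
    (hd : (S : Set ι).PairwiseDisjoint fun m => Ioc (a m) (a m + δ))
    (hℓ : ∀ m ∈ S, ℓ m ∈ Icc δ (2 * δ)) (hh : MemWeightedL2 h)
    (hfar : ∀ t ∈ support h, 2 ≤ |t|) (hψ : HasCubicDecay ψ B)
    (hη : HasCubicDecay (dilationDeriv ψ) B') (hx : |x| ≤ 1) :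
    ∑ m ∈ S, ‖𝓕 (fun t => h t * (ℓ m • ψ (ℓ m * (x - t)))) (a m) -
        𝓕 (fun t => h t * (ℓ m • ψ (ℓ m * (0 - t)))) (a m)‖ₑ ^ 2 ≤
      ENNReal.ofReal (2621440 * (B ^ 2 + B' ^ 2) * min δ δ⁻¹) *
        ∫⁻ t, ‖(1 + |t|)⁻¹ • h t‖ₑ ^ 2 := by
  set W := ∫⁻ t, ‖(1 + |t|)⁻¹ • h t‖ₑ ^ 2
  have hpos : ∀ s ∈ Icc δ (2 * δ), 0 < s := fun s hs => hδ.trans_le hs.1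
  refine (sum_enorm_sq_le_of_forall_sum_enorm_sq_le
    (F := fun m s => 𝓕 (fun t => h t * (s • ψ (s * (x - t)))) (a m) -
      𝓕 (fun t => h t * (s • ψ (s * (0 - t)))) (a m))
    (M := ENNReal.ofReal (1310720 * B ^ 2 * min δ δ⁻¹) * W)
    (M' := ENNReal.ofReal (1310720 * B' ^ 2 * min δ δ⁻¹) * W) (by linarith) hℓ
    (fun m _ s hs => (hasDerivAt_fourier_mul_smul_dilated hh hψ hη (hpos s hs) x (a m)).sub
      (hasDerivAt_fourier_mul_smul_dilated hh hψ hη (hpos s hs) 0 (a m)))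
    (fun m _ => ((continuousOn_fourier_mul_dilated hh hη x (a m)).sub
      (continuousOn_fourier_mul_dilated hh hη 0 (a m))).mono hpos)
    (fun s hs => ?_) fun s hs => ?_).trans_eq ?_
  · simpa only [div_self (hpos s hs).ne', one_pow, one_mul] using
      sum_enorm_fourier_dilated_sub_sq_le hδ hd hh hfar hψ hx hs s
  · have hle := sum_enorm_fourier_dilated_sub_sq_le hδ hd hh hfar hη hx hs 1
    have hδs : (2 * δ - δ) ^ 2 * (1 / s) ^ 2 ≤ 1 := by
      rw [← mul_pow, mul_one_div]
      exact pow_le_one₀ (div_nonneg (by linarith) (hpos s hs).le)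
        ((div_le_one (hpos s hs)).2 (by linarith [hs.1]))
    simp only [one_smul] at hle
    refine (mul_le_mul_right hle _).trans ?_
    rw [← mul_assoc, ← ENNReal.ofReal_mul (by positivity), ← mul_assoc (_ ^ 2)]
    gcongr ENNReal.ofReal ?_ * _
    exact mul_le_of_le_one_left (by positivity) hδs
  · rw [← ENNReal.ofReal_ofNat 2, ← mul_assoc, ← mul_assoc, ← ENNReal.ofReal_mul zero_le_two,
      ← ENNReal.ofReal_mul zero_le_two, ← add_mul,
      ← ENNReal.ofReal_add (by positivity) (by positivity)]
    congr 2
    ring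

theorem min_zpow_two_inv_le (j : ℤ) : min ((2 : ℝ) ^ j) ((2 : ℝ) ^ j)⁻¹ ≤ (1 / 2) ^ j.natAbs := by
  obtain ⟨n, rfl | rfl⟩ := j.eq_nat_or_neg
  · exact (min_le_right _ _).trans (by simp)
  · exact (min_le_left _ _).trans (by simp)

theorem summable_half_pow_natAbs : Summable fun j : ℤ => (1 / 2 : ℝ) ^ j.natAbs :=
  .of_nat_of_neg (by simpa using summable_geometric_two) (by simpa using summable_geometric_two)

/-- The constant of the far-part estimate: the geometric series sums, over the dyadic scales
`2 ^ j` of the frequency intervals, the single-scale gain `min (2 ^ j) (2 ^ j)⁻¹`. -/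
noncomputable def farConstant (B B' : ℝ) : ℝ :=
  2621440 * (B ^ 2 + B' ^ 2) * ∑' j : ℤ, (1 / 2 : ℝ) ^ j.natAbs

theorem sum_enorm_fourier_dilated_sub_sq_le_farConstant [Fintype ι] {b : ι → ℝ} {B' : ℝ}
    (hab : ∀ m, a m < b m) (hd : Pairwise (Disjoint on fun m => Ioo (a m) (b m)))
    (hh : MemWeightedL2 h) (hfar : ∀ t ∈ support h, 2 ≤ |t|) (hψ : HasCubicDecay ψ B)
    (hη : HasCubicDecay (dilationDeriv ψ) B') (hx : |x| ≤ 1) :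
    ∑ m, ‖𝓕 (fun t => h t * ((b m - a m) • ψ ((b m - a m) * (x - t)))) (a m) -
        𝓕 (fun t => h t * ((b m - a m) • ψ ((b m - a m) * (0 - t)))) (a m)‖ₑ ^ 2 ≤
      ENNReal.ofReal (farConstant B B') *
        ∫⁻ t, ‖(1 + |t|)⁻¹ • h t‖ₑ ^ 2 := by
  classical
  let scale : ι → ℤ := fun m => Int.log 2 (b m - a m)
  have hpos : ∀ m, 0 < b m - a m := fun m => sub_pos.2 (hab m)
  have hscale : ∀ m, b m - a m ∈ Ico ((2 : ℝ) ^ scale m) (2 * 2 ^ scale m) := fun m =>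
    ⟨mod_cast Int.zpow_log_le_self (b := 2) one_lt_two (hpos m), by
      simpa [zpow_add_one₀, mul_comm] using
        Int.lt_zpow_succ_log_self (b := 2) one_lt_two (b m - a m)⟩
  rw [← Finset.sum_fiberwise_of_maps_to (t := Finset.univ.image scale) (g := scale)
      fun m _ => Finset.mem_image_of_mem _ (Finset.mem_univ m)]
  have hfiber : ∀ i ∈ Finset.univ.image scale, ∑ m with scale m = i,
      ‖𝓕 (fun t => h t * ((b m - a m) • ψ ((b m - a m) * (x - t)))) (a m) -
        𝓕 (fun t => h t * ((b m - a m) • ψ ((b m - a m) * (0 - t)))) (a m)‖ₑ ^ 2 ≤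
      ENNReal.ofReal (2621440 * (B ^ 2 + B' ^ 2) * (1 / 2) ^ i.natAbs) *
        ∫⁻ t, ‖(1 + |t|)⁻¹ • h t‖ₑ ^ 2 := fun i _ => by
    have hmem : ∀ m ∈ (Finset.univ.filter (scale · = i) : Finset ι),
        b m - a m ∈ Ico ((2 : ℝ) ^ i) (2 * 2 ^ i) := fun m hm =>
      (Finset.mem_filter.1 hm).2 ▸ hscale m
    refine (sum_enorm_fourier_dilated_sub_sq_le_of_comparable (ℓ := fun m => b m - a m)
      (zpow_pos two_pos i) (fun m hm m' hm' hne => ?_)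
      (fun m hm => Ico_subset_Icc_self (hmem m hm)) hh hfar hψ hη hx).trans ?_
    · refine Ioc_disjoint_Ioc.2 ((min_le_min ?_ ?_).trans (Ioo_disjoint_Ioo.1 (hd hne)))
      · linarith [(hmem m hm).1]
      · linarith [(hmem m' hm').1]
    · gcongr
      exact min_zpow_two_inv_le i
  refine (Finset.sum_le_sum hfiber).trans ?_
  rw [← Finset.sum_mul, ← ENNReal.ofReal_sum_of_nonneg (fun i _ => by positivity),
    ← Finset.mul_sum, farConstant]
  gcongr
  exact summable_half_pow_natAbs.sum_le_tsum _ fun i _ => by positivity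

end FarPart

section Modulations

theorem e2pi_eq_fourierChar (t : ℝ) : e2pi t = (𝐞 t : ℂ) := by
  rw [Real.fourierChar_apply, e2pi]
  push_cast
  congr 1
  ring

theorem norm_e2pi (t : ℝ) : ‖e2pi t‖ = 1 := by
  rw [e2pi_eq_fourierChar, Circle.norm_coe]

theorem continuous_e2pi : Continuous e2pi := by
  unfold e2pi
  fun_prop

theorem e2pi_add (s t : ℝ) : e2pi (s + t) = e2pi s * e2pi t := by
  simp only [e2pi_eq_fourierChar, AddChar.map_add_eq_mul, Circle.coe_mul]

theorem fourier_eq_integral_e2pi_mul (f : ℝ → ℂ) (ξ : ℝ) :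
    𝓕 f ξ = ∫ t, e2pi (-(ξ * t)) * f t := by
  simp only [Real.fourier_real_eq, Circle.smul_def, smul_eq_mul, e2pi_eq_fourierChar, mul_comm ξ]

variable {φ : ℝ → ℂ} {a b : ℝ}

theorem norm_phim (φ : ℝ → ℂ) (a b x : ℝ) : ‖phim φ a b x‖ = |b - a| * ‖φ ((b - a) * x)‖ := by
  simp only [phim, norm_mul, norm_e2pi, Complex.norm_real, Real.norm_eq_abs, mul_one]

theorem continuous_phim (hφ : Continuous φ) (a b : ℝ) : Continuous (phim φ a b) := by
  have := continuous_e2pi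
  unfold phim
  fun_prop

theorem integrable_phim (hφ : Integrable φ) (hab : a < b) : Integrable (phim φ a b) := by
  have hdil := (hφ.comp_mul_left' (sub_pos.2 hab).ne').const_mul (b - a : ℂ)
  have hmod : Continuous fun x => e2pi (a * x) := continuous_e2pi.comp (by fun_prop)
  refine (hdil.bdd_mul hmod.aestronglyMeasurable (.of_forall fun x => (norm_e2pi _).le)).congr
    (.of_forall fun x => ?_)
  simp only [phim, Complex.ofReal_sub]
  ring

theorem fourier_phim (φ : ℝ → ℂ) (hab : a < b) (ξ : ℝ) :
    𝓕 (phim φ a b) ξ = 𝓕 φ ((ξ - a) / (b - a)) := by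
  have hL : 0 < b - a := sub_pos.2 hab
  have change_var := Measure.integral_comp_mul_left
    (fun w => e2pi (-((ξ - a) / (b - a) * w)) * φ w) (b - a)
  rw [abs_of_pos (inv_pos.2 hL), eq_inv_smul_iff₀ hL.ne', ← integral_smul] at change_var
  rw [fourier_eq_integral_e2pi_mul, fourier_eq_integral_e2pi_mul, ← change_var]
  congr with t
  have phase : -((ξ - a) / (b - a) * ((b - a) * t)) = -(ξ * t) + a * t := by
    field_simp
    ring
  rw [phase, e2pi_add, phim, Complex.real_smul]
  ring

theorem support_fourier_phim_subset (hsupp : support (𝓕 φ) ⊆ Ioo 0 1) (hab : a < b) :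
    support (𝓕 (phim φ a b)) ⊆ Ioo a b := fun ξ hξ => by
  rw [mem_support, fourier_phim φ hab] at hξ
  have hmem := hsupp hξ
  have hL := sub_pos.2 hab
  rw [mem_Ioo, lt_div_iff₀ hL, div_lt_iff₀ hL] at hmem
  constructor <;> linarith

theorem integral_phim_eq_zero (hsupp : support (𝓕 φ) ⊆ Ioo 0 1) (hab : a < b)
    (h0 : (0 : ℝ) ∉ Ioo a b) : ∫ x, phim φ a b x = 0 := by
  have hzero : 𝓕 (phim φ a b) 0 = 0 :=
    notMem_support.1 fun h => h0 (support_fourier_phim_subset hsupp hab h)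
  simpa [Real.fourier_eq] using hzero

theorem conv_const (c : ℂ) (g : ℝ → ℂ) (x : ℝ) : conv (fun _ => c) g x = c * ∫ t, g t := by
  rw [conv, integral_const_mul, integral_sub_left_eq_self]

theorem norm_rotConv (φ : ℝ → ℂ) (a b : ℝ) (f : ℝ → ℂ) (x : ℝ) :
    ‖rotConv φ a b f x‖ = ‖conv f (phim φ a b) x‖ := by
  rw [rotConv, norm_mul, norm_e2pi, one_mul]

theorem rotConv_const (hsupp : support (𝓕 φ) ⊆ Ioo 0 1) (hab : a < b) (h0 : (0 : ℝ) ∉ Ioo a b)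
    (c : ℂ) (x : ℝ) : rotConv φ a b (fun _ => c) x = 0 := by
  rw [rotConv, conv_const, integral_phim_eq_zero hsupp hab h0, mul_zero, mul_zero]

-- The rotation cancels the modulation of `phim`, so that no oscillating factor depends on `x`.
theorem rotConv_eq_fourier (φ : ℝ → ℂ) (a b : ℝ) (f : ℝ → ℂ) (x : ℝ) :
    rotConv φ a b f x = 𝓕 (fun t => f t * ((b - a) • φ ((b - a) * (x - t)))) a := by
  rw [rotConv, conv, fourier_eq_integral_e2pi_mul, ← integral_const_mul]
  congr with t
  have phase : -(a * t) = -(a * x) + a * (x - t) := by ring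
  rw [phase, e2pi_add, phim, Complex.real_smul]
  ring

theorem MemWeightedL2.rotConv_sub {f g : ℝ → ℂ} {B : ℝ} (hf : MemWeightedL2 f)
    (hg : MemWeightedL2 g) (hφ : HasCubicDecay φ B) (hab : a < b) (x : ℝ) :
    rotConv φ a b (fun t => f t - g t) x = rotConv φ a b f x - rotConv φ a b g x := by
  have hL : 0 < b - a := sub_pos.2 hab
  rw [rotConv_eq_fourier, rotConv_eq_fourier, rotConv_eq_fourier,
    ← fourier_sub_apply (hf.integrable_mul_smul_dilated hφ (b - a) hL x)
      (hg.integrable_mul_smul_dilated hφ (b - a) hL x)]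
  simp only [sub_mul]

theorem memWeightedL2_const {E : Type*} [NormedAddCommGroup E] [NormedSpace ℝ E] (c : E) :
    MemWeightedL2 fun _ : ℝ => c :=
  (ContinuousLinearMap.toSpanSingleton ℝ c).comp_memLp' memLp_inv_one_add_abs

theorem MemWeightedL2.rotConv_sub_const {f : ℝ → ℂ} {B : ℝ} (hf : MemWeightedL2 f)
    (hφ : HasCubicDecay φ B) (hsupp : support (𝓕 φ) ⊆ Ioo 0 1) (hab : a < b)
    (h0 : (0 : ℝ) ∉ Ioo a b) (c : ℂ) (x : ℝ) :
    rotConv φ a b (fun t => f t - c) x = rotConv φ a b f x := by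
  rw [hf.rotConv_sub (memWeightedL2_const c) hφ hab, rotConv_const hsupp hab h0, sub_zero]

theorem aestronglyMeasurable_rotConv {f : ℝ → ℂ} (hf : AEStronglyMeasurable f)
    (hφ : Continuous φ) (a b : ℝ) : AEStronglyMeasurable (rotConv φ a b f) := by
  have hmod : Continuous fun x => e2pi (-(a * x)) := continuous_e2pi.comp (by fun_prop)
  have hker : Continuous fun p : ℝ × ℝ => phim φ a b (p.1 - p.2) :=
    (continuous_phim hφ a b).comp (by fun_prop)
  exact hmod.aestronglyMeasurable.mul
    ((hf.comp_snd (μ := volume)).mul hker.aestronglyMeasurable).integral_prod_right'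

end Modulations

section NearPart

theorem memLp_two_of_integrable_of_norm_le {α E : Type*} [MeasurableSpace α] {μ : Measure α}
    [NormedAddCommGroup E] {g : α → E} {M : ℝ} (hg : Integrable g μ) (hM : ∀ x, ‖g x‖ ≤ M) :
    MemLp g 2 μ :=
  (memLp_two_iff_integrable_sq_norm hg.1).2 <| by
    simpa only [sq] using hg.norm.bdd_mul hg.1.norm (.of_forall fun x => by simpa using hM x)

theorem sum_le_of_pairwise_disjoint_support {ι α : Type*} [Fintype ι] {g : ι → α → ℝ≥0∞}
    {c : ℝ≥0∞} (hd : Pairwise (Disjoint on fun m => support (g m))) (hc : ∀ m x, g m x ≤ c)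
    (x : α) : ∑ m, g m x ≤ c := by
  by_cases h : ∃ m, x ∈ support (g m)
  · obtain ⟨m, hm⟩ := h
    rw [Fintype.sum_eq_single m fun m' hne =>
      notMem_support.1 (disjoint_right.1 (hd hne) hm)]
    exact hc m x
  · simp only [not_exists, notMem_support] at h
    simp only [h, Finset.sum_const_zero, zero_le]

variable {f g : ℝ → ℂ} {M : ℝ}

theorem norm_conv_le (hf : Integrable f) (hM : ∀ x, ‖g x‖ ≤ M) (x : ℝ) :
    ‖conv f g x‖ ≤ (∫ t, ‖f t‖) * M := by
  rw [← integral_mul_const]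
  exact norm_integral_le_of_norm_le (hf.norm.mul_const M)
    (.of_forall fun t => norm_mul_le_of_le le_rfl (hM _))

theorem lintegral_enorm_conv_sq (hf : Integrable f) (hg : Integrable g) (hM : ∀ x, ‖g x‖ ≤ M) :
    ∫⁻ x, ‖conv f g x‖ₑ ^ 2 = ∫⁻ ξ, ‖𝓕 f ξ‖ₑ ^ 2 * ‖𝓕 g ξ‖ₑ ^ 2 := by
  have conv_eq : conv f g = convolution f g (ContinuousLinearMap.mul ℂ ℂ) volume := rfl
  have hconv : Integrable (conv f g) := conv_eq ▸ hf.integrable_convolution _ hg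
  rw [← lintegral_enorm_fourier_sq hconv
    (memLp_two_of_integrable_of_norm_le hconv (norm_conv_le hf hM)), conv_eq]
  simp only [Real.fourier_mul_convolution_eq hf hg, enorm_mul, mul_pow]

variable {φ : ℝ → ℂ}

theorem enorm_fourier_le (φ : ℝ → ℂ) (ξ : ℝ) : ‖𝓕 φ ξ‖ₑ ≤ ENNReal.ofReal (∫ t, ‖φ t‖) := by
  rw [← ofReal_norm]
  exact ENNReal.ofReal_le_ofReal
    (VectorFourier.norm_fourierIntegral_le_integral_norm 𝐞 volume (innerₗ ℝ) φ ξ)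

theorem sum_enorm_fourier_phim_sq_le {ι : Type*} [Fintype ι] {a b : ι → ℝ}
    (hsupp : support (𝓕 φ) ⊆ Ioo 0 1) (hab : ∀ m, a m < b m)
    (hd : Pairwise (Disjoint on fun m => Ioo (a m) (b m))) (ξ : ℝ) :
    ∑ m, ‖𝓕 (phim φ (a m) (b m)) ξ‖ₑ ^ 2 ≤ ENNReal.ofReal (∫ t, ‖φ t‖) ^ 2 := by
  refine sum_le_of_pairwise_disjoint_support (g := fun m ξ => ‖𝓕 (phim φ (a m) (b m)) ξ‖ₑ ^ 2)
    (fun m m' hne => (hd hne).mono ?_ ?_) (fun m ξ => ?_) ξ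
  · exact fun ξ hξ => support_fourier_phim_subset hsupp (hab m) fun h => hξ (by simp [h])
  · exact fun ξ hξ => support_fourier_phim_subset hsupp (hab m') fun h => hξ (by simp [h])
  · rw [fourier_phim φ (hab m)]
    gcongr
    exact enorm_fourier_le φ _

theorem sum_lintegral_enorm_conv_phim_sq_le {ι : Type*} [Fintype ι] {a b : ι → ℝ}
    (hφ : Integrable φ) (hM : ∀ x, ‖φ x‖ ≤ M) (hsupp : support (𝓕 φ) ⊆ Ioo 0 1)
    (hab : ∀ m, a m < b m) (hd : Pairwise (Disjoint on fun m => Ioo (a m) (b m)))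
    (hf : Integrable f) (hf2 : MemLp f 2) :
    ∑ m, ∫⁻ x, ‖conv f (phim φ (a m) (b m)) x‖ₑ ^ 2 ≤
      ENNReal.ofReal (∫ t, ‖φ t‖) ^ 2 * ∫⁻ x, ‖f x‖ₑ ^ 2 := by
  have hint : ∀ m, Integrable (phim φ (a m) (b m)) := fun m => integrable_phim hφ (hab m)
  have hbound : ∀ m x, ‖phim φ (a m) (b m) x‖ ≤ |b m - a m| * M := fun m x => by
    rw [norm_phim]
    gcongr
    exact hM _
  have hmeas : ∀ m, Measurable fun ξ => ‖𝓕 f ξ‖ₑ ^ 2 * ‖𝓕 (phim φ (a m) (b m)) ξ‖ₑ ^ 2 :=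
    fun m => ((fourier_continuous hf).measurable.enorm.pow_const 2).mul
      ((fourier_continuous (hint m)).measurable.enorm.pow_const 2)
  calc ∑ m, ∫⁻ x, ‖conv f (phim φ (a m) (b m)) x‖ₑ ^ 2
      = ∫⁻ ξ, ‖𝓕 f ξ‖ₑ ^ 2 * ∑ m, ‖𝓕 (phim φ (a m) (b m)) ξ‖ₑ ^ 2 := by
        simp only [lintegral_enorm_conv_sq hf (hint _) (hbound _), Finset.mul_sum]
        exact (lintegral_finsetSum _ fun m _ => hmeas m).symm
    _ ≤ ∫⁻ ξ, ‖𝓕 f ξ‖ₑ ^ 2 * ENNReal.ofReal (∫ t, ‖φ t‖) ^ 2 := by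
        gcongr with ξ
        exact sum_enorm_fourier_phim_sq_le hsupp hab hd ξ
    _ = ENNReal.ofReal (∫ t, ‖φ t‖) ^ 2 * ∫⁻ x, ‖f x‖ₑ ^ 2 := by
        rw [lintegral_mul_const' _ _ (by finiteness), lintegral_enorm_fourier_sq hf hf2, mul_comm]

end NearPart

namespace HasCubicDecay

variable {E : Type*} [NormedAddCommGroup E] [NormedSpace ℝ E]

theorem integrable {ψ : ℝ → E} {B : ℝ} (h : HasCubicDecay ψ B) : Integrable ψ := by
  refine (integrable_inv_one_add_sq.const_mul B).mono' h.continuous.aestronglyMeasurable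
    (.of_forall fun y => (h.norm_le y).trans ?_)
  have hB := h.nonneg
  rw [← div_eq_mul_inv]
  gcongr
  nlinarith [sq_abs y, abs_nonneg y, pow_nonneg (abs_nonneg y) 3]

theorem exists_of_schwartzMap (f : SchwartzMap ℝ E) : ∃ B, HasCubicDecay f B := by
  have decay (n : ℕ) : ∃ C, ∀ y : ℝ, ‖iteratedDeriv n f y‖ ≤ C / (1 + |y|) ^ 3 :=
    ⟨_, fun y => (le_div_iff₀' (by positivity)).2 <| by
      simpa only [norm_iteratedFDeriv_eq_norm_iteratedDeriv, Real.norm_eq_abs] using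
        SchwartzMap.one_add_le_sup_seminorm_apply (𝕜 := ℝ) (m := (3, n)) le_rfl le_rfl f y⟩
  obtain ⟨C₀, h₀⟩ := decay 0
  obtain ⟨C₁, h₁⟩ := decay 1
  refine ⟨max C₀ C₁, f.differentiable, fun y => ?_, fun y => ?_⟩
  · rw [← iteratedDeriv_zero (f := ⇑f)]
    refine (h₀ y).trans ?_
    gcongr
    exact le_max_left _ _
  · rw [← iteratedDeriv_one]
    refine (h₁ y).trans ?_
    gcongr
    exact le_max_right _ _

theorem exists_dilationDeriv_of_schwartzMap (f : SchwartzMap ℝ E) :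
    ∃ B, HasCubicDecay (dilationDeriv f) B := by
  have hid : (fun y : ℝ => y).HasTemperateGrowth := by fun_prop
  have coe_eq : ⇑(f + SchwartzMap.smulLeftCLM E (fun y : ℝ => y) (SchwartzMap.derivCLM ℝ E f)) =
      dilationDeriv f := by
    ext y
    simp [dilationDeriv, hid]
  exact coe_eq ▸ exists_of_schwartzMap _

end HasCubicDecay

section UnitInterval

theorem MemWeightedL2.indicator {E : Type*} [NormedAddCommGroup E] [NormedSpace ℝ E] {h : ℝ → E}
    (hh : MemWeightedL2 h) {s : Set ℝ} (hs : MeasurableSet s) : MemWeightedL2 (s.indicator h) := by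
  simpa only [MemWeightedL2, indicator_smul] using MemLp.indicator hs hh

theorem lintegral_weight_smul_indicator_sq_le {E : Type*} [NormedAddCommGroup E]
    [NormedSpace ℝ E] (h : ℝ → E) (s : Set ℝ) :
    ∫⁻ t, ‖(1 + |t|)⁻¹ • s.indicator h t‖ₑ ^ 2 ≤ ∫⁻ t, ‖(1 + |t|)⁻¹ • h t‖ₑ ^ 2 := by
  refine lintegral_mono fun t => ?_
  rw [enorm_smul, enorm_smul]
  gcongr
  exact enorm_indicator_le_enorm_self h t

variable {φ g : ℝ → ℂ} {B B' : ℝ} {ι : Type*} [Fintype ι] {a b : ι → ℝ}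

theorem sum_lintegral_enorm_rotConv_indicator_sq_le (hφ : HasCubicDecay φ B)
    (hsupp : support (𝓕 φ) ⊆ Ioo 0 1) (hab : ∀ m, a m < b m)
    (hd : Pairwise (Disjoint on fun m => Ioo (a m) (b m))) {s : Set ℝ} (hs : MeasurableSet s)
    (hsfin : volume s ≠ ∞) (hg : MemLp g 2 (volume.restrict s)) :
    ∑ m, ∫⁻ x, ‖rotConv φ (a m) (b m) (s.indicator g) x‖ₑ ^ 2 ≤
      ENNReal.ofReal (∫ t, ‖φ t‖) ^ 2 * ∫⁻ t in s, ‖g t‖ₑ ^ 2 := by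
  have : IsFiniteMeasure (volume.restrict s) := ⟨by simpa using hsfin.lt_top⟩
  have hint : Integrable (s.indicator g) :=
    (integrable_indicator_iff hs).2 (hg.integrable one_le_two)
  simp only [← ofReal_norm, norm_rotConv]
  simp only [ofReal_norm]
  refine (sum_lintegral_enorm_conv_phim_sq_le hφ.integrable hφ.norm_le_const hsupp hab hd hint
    ((memLp_indicator_iff_restrict hs).2 hg)).trans_eq ?_
  rw [← lintegral_indicator hs]
  congr with t
  by_cases ht : t ∈ s <;> simp [ht]

theorem sum_enorm_rotConv_indicator_compl_sub_sq_le (hφ : HasCubicDecay φ B)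
    (hη : HasCubicDecay (dilationDeriv φ) B') (hab : ∀ m, a m < b m)
    (hd : Pairwise (Disjoint on fun m => Ioo (a m) (b m))) (hg : MemWeightedL2 g) {x : ℝ}
    (hx : |x| ≤ 1) :
    ∑ m, ‖rotConv φ (a m) (b m) ((Ioc (-2) 2)ᶜ.indicator g) x -
        rotConv φ (a m) (b m) ((Ioc (-2) 2)ᶜ.indicator g) 0‖ₑ ^ 2 ≤
      ENNReal.ofReal (farConstant B B') *
        ∫⁻ t, ‖(1 + |t|)⁻¹ • g t‖ₑ ^ 2 := by
  have hfar : ∀ t ∈ support ((Ioc (-2) 2)ᶜ.indicator g), 2 ≤ |t| := fun t ht => by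
    have hmem : t ∈ (Ioc (-2 : ℝ) 2)ᶜ := support_indicator_subset ht
    by_contra! hlt
    exact hmem ⟨(abs_lt.1 hlt).1, (abs_lt.1 hlt).2.le⟩
  simp only [rotConv_eq_fourier]
  refine (sum_enorm_fourier_dilated_sub_sq_le_farConstant hab hd
    (hg.indicator measurableSet_Ioc.compl) hfar hφ hη hx).trans ?_
  gcongr ENNReal.ofReal _ * ?_
  exact lintegral_weight_smul_indicator_sq_le g _

theorem MemWeightedL2.aestronglyMeasurable_rotConv_indicator (hg : MemWeightedL2 g)
    (hφ : Continuous φ) {s : Set ℝ} (hs : MeasurableSet s) (a b : ℝ) :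
    AEStronglyMeasurable (rotConv φ a b (s.indicator g)) :=
  aestronglyMeasurable_rotConv (hg.aestronglyMeasurable.indicator hs) hφ a b

theorem sum_setLIntegral_enorm_rotConv_indicator_compl_sub_sq_le (hφ : HasCubicDecay φ B)
    (hη : HasCubicDecay (dilationDeriv φ) B') (hab : ∀ m, a m < b m)
    (hd : Pairwise (Disjoint on fun m => Ioo (a m) (b m))) (hg : MemWeightedL2 g) :
    ∑ m, ∫⁻ x in Ioc (-1) 1, ‖rotConv φ (a m) (b m) ((Ioc (-2) 2)ᶜ.indicator g) x -
        rotConv φ (a m) (b m) ((Ioc (-2) 2)ᶜ.indicator g) 0‖ₑ ^ 2 ≤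
      2 * (ENNReal.ofReal (farConstant B B') * ∫⁻ t, ‖(1 + |t|)⁻¹ • g t‖ₑ ^ 2) := by
  have hmeas (m : ι) (c : ℂ) : AEMeasurable (fun x =>
      ‖rotConv φ (a m) (b m) ((Ioc (-2) 2)ᶜ.indicator g) x - c‖ₑ ^ 2)
        (volume.restrict (Ioc (-1) 1)) :=
    (((hg.aestronglyMeasurable_rotConv_indicator hφ.continuous measurableSet_Ioc.compl
      (a m) (b m)).sub aestronglyMeasurable_const).enorm.pow_const 2).restrict
  rw [← lintegral_finsetSum' _ fun m _ => hmeas m _]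
  refine (setLIntegral_mono' measurableSet_Ioc fun x hx =>
    sum_enorm_rotConv_indicator_compl_sub_sq_le hφ hη hab hd hg
      (abs_le.2 ⟨hx.1.le, hx.2⟩)).trans_eq ?_
  rw [setLIntegral_const, Real.volume_Ioc, mul_comm]
  norm_num

theorem MemWeightedL2.rotConv_eq_add_indicator_compl (hg : MemWeightedL2 g)
    (hφ : HasCubicDecay φ B) {s : Set ℝ} (hs : MeasurableSet s) {a b : ℝ} (hab : a < b) (x : ℝ) :
    rotConv φ a b g x =
      rotConv φ a b (s.indicator g) x + rotConv φ a b (sᶜ.indicator g) x := by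
  have split : s.indicator g = fun t => g t - sᶜ.indicator g t :=
    eq_sub_of_add_eq (indicator_self_add_compl s g)
  rw [split, hg.rotConv_sub (hg.indicator hs.compl) hφ hab, sub_add_cancel]

theorem sum_setLIntegral_enorm_rotConv_sub_sq_le (hφ : HasCubicDecay φ B)
    (hη : HasCubicDecay (dilationDeriv φ) B') (hsupp : support (𝓕 φ) ⊆ Ioo 0 1)
    (hab : ∀ m, a m < b m) (hd : Pairwise (Disjoint on fun m => Ioo (a m) (b m)))
    (hg : MemWeightedL2 g) (hg2 : MemLp g 2 (volume.restrict (Ioc (-2) 2))) :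
    ∑ m, ∫⁻ x in Ioc (-1) 1, ‖rotConv φ (a m) (b m) g x -
        rotConv φ (a m) (b m) ((Ioc (-2) 2)ᶜ.indicator g) 0‖ₑ ^ 2 ≤
      2 * (ENNReal.ofReal (∫ t, ‖φ t‖) ^ 2 * (∫⁻ t in Ioc (-2) 2, ‖g t‖ₑ ^ 2) +
        2 * (ENNReal.ofReal (farConstant B B') * ∫⁻ t, ‖(1 + |t|)⁻¹ • g t‖ₑ ^ 2)) := by
  have near_le : ∑ m, ∫⁻ x in Ioc (-1) 1,
      ‖rotConv φ (a m) (b m) ((Ioc (-2) 2).indicator g) x‖ₑ ^ 2 ≤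
        ENNReal.ofReal (∫ t, ‖φ t‖) ^ 2 * ∫⁻ t in Ioc (-2) 2, ‖g t‖ₑ ^ 2 :=
    (Finset.sum_le_sum fun m _ => setLIntegral_le_lintegral _ _).trans
      (sum_lintegral_enorm_rotConv_indicator_sq_le hφ hsupp hab hd measurableSet_Ioc (by simp) hg2)
  refine le_trans ?_ (mul_le_mul_right (add_le_add near_le
    (sum_setLIntegral_enorm_rotConv_indicator_compl_sub_sq_le hφ hη hab hd hg)) 2)
  rw [← Finset.sum_add_distrib, Finset.mul_sum]
  gcongr with m
  rw [← lintegral_add_left' ((hg.aestronglyMeasurable_rotConv_indicator hφ.continuous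
      measurableSet_Ioc (a m) (b m)).restrict.enorm.pow_const 2),
    ← lintegral_const_mul' _ _ ENNReal.ofNat_ne_top]
  refine lintegral_mono fun x => ?_
  rw [hg.rotConv_eq_add_indicator_compl hφ (s := Ioc (-2) 2) measurableSet_Ioc (hab m),
    add_sub_assoc]
  exact enorm_add_sq_le _ _

theorem exists_sum_setLIntegral_enorm_rotConv_sub_sq_le.{u} (hφ : HasCubicDecay φ B)
    (hη : HasCubicDecay (dilationDeriv φ) B') (hsupp : support (𝓕 φ) ⊆ Ioo 0 1) :
    ∃ C : ℝ≥0∞, C ≠ ∞ ∧ ∀ {ι : Type u} [Fintype ι] {a b : ι → ℝ}, (∀ m, a m < b m) →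
      (∀ m, (0 : ℝ) ∉ Ioo (a m) (b m)) → Pairwise (Disjoint on fun m => Ioo (a m) (b m)) →
      ∀ {K : ℝ≥0∞} {f : ℝ → ℂ}, K ≠ ∞ → IsBMOWith K f → ∃ c : ι → ℂ,
        ∑ m, ∫⁻ x in Ioc (-1) 1, ‖rotConv φ (a m) (b m) f x - c m‖ₑ ^ 2 ≤ C * K ^ 2 := by
  obtain ⟨C, hC, weighted_le⟩ := exists_lintegral_weight_smul_sub_average_sq_le (E := ℂ)
  refine ⟨2 * (ENNReal.ofReal (∫ t, ‖φ t‖) ^ 2 * 256 +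
    2 * (ENNReal.ofReal (farConstant B B') * C)), by finiteness,
    fun {ι _ a b} hab h0 hd {K f} hK hf => ?_⟩
  set c := ⨍ r in (-2)..2, f r
  have hm : AEStronglyMeasurable fun t => f t - c :=
    hf.locallyIntegrable.aestronglyMeasurable.sub aestronglyMeasurable_const
  have local_le : ∫⁻ t in Ioc (-2) 2, ‖f t - c‖ₑ ^ 2 ≤ 256 * K ^ 2 := by
    refine (hf.lintegral_sub_average_sq_le (by norm_num)).trans_eq ?_
    rw [show (2 : ℝ) - -2 = 4 by norm_num, ENNReal.ofReal_ofNat]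
    ring
  have hg : MemWeightedL2 fun t => f t - c :=
    memLp_two_iff.2 ⟨(by fun_prop (disch := intros; positivity) :
      Measurable fun t : ℝ => (1 + |t|)⁻¹).aestronglyMeasurable.smul hm,
      (weighted_le hf).trans_lt (by finiteness)⟩
  have hg2 : MemLp (fun t => f t - c) 2 (volume.restrict (Ioc (-2) 2)) :=
    memLp_two_iff.2 ⟨hm.restrict, local_le.trans_lt (by finiteness)⟩
  have rotConv_eq m x :
      rotConv φ (a m) (b m) (fun t => f t - c) x = rotConv φ (a m) (b m) f x := by
    simpa using (hg.rotConv_sub_const hφ hsupp (hab m) (h0 m) (-c) x).symm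
  refine ⟨fun m => rotConv φ (a m) (b m) ((Ioc (-2) 2)ᶜ.indicator fun t => f t - c) 0, ?_⟩
  simp only [← rotConv_eq _ _]
  calc
    _ ≤ 2 * (ENNReal.ofReal (∫ t, ‖φ t‖) ^ 2 * (∫⁻ t in Ioc (-2) 2, ‖f t - c‖ₑ ^ 2) +
          2 * (ENNReal.ofReal (farConstant B B') * ∫⁻ t, ‖(1 + |t|)⁻¹ • (f t - c)‖ₑ ^ 2)) :=
      sum_setLIntegral_enorm_rotConv_sub_sq_le hφ hη hsupp hab hd hg hg2
    _ ≤ 2 * (ENNReal.ofReal (∫ t, ‖φ t‖) ^ 2 * (256 * K ^ 2) +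
          2 * (ENNReal.ofReal (farConstant B B') * (C * K ^ 2))) := by
      gcongr
      exact weighted_le hf
    _ = _ := by ring

end UnitInterval

section Rescaling

variable {E : Type*} [NormedAddCommGroup E] {r : ℝ}

theorem map_volume_mul_add (hr : 0 < r) (x₀ : ℝ) :
    Measure.map (fun x => r * x + x₀) volume = ENNReal.ofReal r⁻¹ • volume := by
  have hcomp : (fun x => r * x + x₀) = (· + x₀) ∘ (r * ·) := rfl
  rw [hcomp, ← Measure.map_map (by fun_prop) (by fun_prop), Real.map_volume_mul_left hr.ne',
    Measure.map_smul, map_add_right_eq_self, abs_of_pos (inv_pos.2 hr)]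

theorem setLIntegral_comp_mul_add (hr : 0 < r) (x₀ : ℝ) (g : ℝ → ℝ≥0∞) (p q : ℝ) :
    ∫⁻ x in Ioc p q, g (r * x + x₀) =
      ENNReal.ofReal r⁻¹ * ∫⁻ y in Ioc (r * p + x₀) (r * q + x₀), g y := by
  have preimage_Ioc : (fun x => r * x + x₀) ⁻¹' Ioc (r * p + x₀) (r * q + x₀) = Ioc p q := by
    ext x
    simp only [mem_preimage, mem_Ioc, add_lt_add_iff_right, add_le_add_iff_right,
      mul_lt_mul_iff_right₀ hr, mul_le_mul_iff_right₀ hr]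
  have he : MeasurableEmbedding fun x => r * x + x₀ :=
    (affineHomeomorph r x₀ hr.ne').measurableEmbedding
  rw [← smul_eq_mul, ← lintegral_smul_measure, ← Measure.restrict_smul, ← map_volume_mul_add hr,
    he.restrict_map, he.lintegral_map, preimage_Ioc]

theorem intervalAverage_comp_mul_add [NormedSpace ℝ E] (hr : r ≠ 0) (x₀ : ℝ) (f : ℝ → E)
    (p q : ℝ) :
    ⨍ x in p..q, f (r * x + x₀) = ⨍ y in (r * p + x₀)..(r * q + x₀), f y := by
  rw [interval_average_eq, interval_average_eq, intervalIntegral.integral_comp_mul_add f hr,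
    smul_smul, ← mul_inv_rev, add_sub_add_right_eq_sub, ← mul_sub]

theorem locallyIntegrable_comp_mul_add {f : ℝ → E} (hf : LocallyIntegrable f) (hr : 0 < r)
    (x₀ : ℝ) : LocallyIntegrable fun x => f (r * x + x₀) := by
  refine (locallyIntegrable_map_homeomorph (affineHomeomorph r x₀ hr.ne')).1 fun x => ?_
  obtain ⟨s, hs, hfs⟩ := hf x
  refine ⟨s, hs, ?_⟩
  change Integrable f ((Measure.map (fun x => r * x + x₀) volume).restrict s)
  rw [map_volume_mul_add hr, Measure.restrict_smul]
  exact hfs.smul_measure ENNReal.ofReal_ne_top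

theorem IsBMOWith.comp_mul_add [NormedSpace ℝ E] {K : ℝ≥0∞} {f : ℝ → E} (hf : IsBMOWith K f)
    (hr : 0 < r) (x₀ : ℝ) : IsBMOWith K fun x => f (r * x + x₀) where
  locallyIntegrable := locallyIntegrable_comp_mul_add hf.locallyIntegrable hr x₀
  oscillation_le u v huv := by
    rw [intervalAverage_comp_mul_add hr.ne', setLIntegral_comp_mul_add hr x₀ fun y => ‖f y - _‖ₑ]
    calc
      _ ≤ ENNReal.ofReal r⁻¹ * (K * ENNReal.ofReal (r * v + x₀ - (r * u + x₀))) := by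
        gcongr
        exact hf.oscillation_le (by gcongr)
      _ = K * ENNReal.ofReal (v - u) := by
        rw [mul_left_comm, ← ENNReal.ofReal_mul (inv_nonneg.2 hr.le), add_sub_add_right_eq_sub,
          ← mul_sub, inv_mul_cancel_left₀ hr.ne']

theorem rotConv_mul_add (φ : ℝ → ℂ) (a b : ℝ) (f : ℝ → ℂ) (hr : 0 < r) (x₀ x : ℝ) :
    rotConv φ a b f (r * x + x₀) =
      e2pi (-(a * x₀)) * rotConv φ (r * a) (r * b) (fun y => f (r * y + x₀)) x := by
  have conv_eq : conv f (phim φ a b) (r * x + x₀) =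
      conv (fun y => f (r * y + x₀)) (phim φ (r * a) (r * b)) x := by
    have substitution := Measure.integral_comp_mul_left
      (fun t => f (t + x₀) * phim φ a b (r * x + x₀ - (t + x₀))) r
    rw [abs_of_pos (inv_pos.2 hr), eq_inv_smul_iff₀ hr.ne', ← integral_smul] at substitution
    rw [conv, ← integral_add_right_eq_self _ x₀, ← substitution, conv]
    congr with t
    have harg : r * x + x₀ - (r * t + x₀) = r * (x - t) := by ring
    rw [harg, phim, phim, Complex.real_smul, ← mul_sub, ← mul_assoc a, mul_comm a,
      ← mul_assoc (b - a), mul_comm (b - a)]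
    push_cast
    ring
  rw [rotConv, rotConv, conv_eq, ← mul_assoc, ← e2pi_add]
  ring_nf

theorem setLIntegral_enorm_rotConv_sub_sq (φ : ℝ → ℂ) (a b : ℝ) (f : ℝ → ℂ) (hr : 0 < r)
    (x₀ : ℝ) (c : ℂ) (p q : ℝ) :
    ∫⁻ y in Ioc (r * p + x₀) (r * q + x₀),
        ‖rotConv φ a b f y - e2pi (-(a * x₀)) * c‖ₑ ^ 2 =
      ENNReal.ofReal r * ∫⁻ x in Ioc p q,
        ‖rotConv φ (r * a) (r * b) (fun y => f (r * y + x₀)) x - c‖ₑ ^ 2 := by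
  have enorm_eq x : ‖rotConv φ (r * a) (r * b) (fun y => f (r * y + x₀)) x - c‖ₑ =
      ‖rotConv φ a b f (r * x + x₀) - e2pi (-(a * x₀)) * c‖ₑ := by
    rw [rotConv_mul_add _ _ _ _ hr, ← mul_sub, enorm_mul, ← ofReal_norm (e2pi _), norm_e2pi,
      ENNReal.ofReal_one, one_mul]
  simp only [enorm_eq]
  rw [setLIntegral_comp_mul_add hr x₀ fun y =>
      ‖rotConv φ a b f y - e2pi (-(a * x₀)) * c‖ₑ ^ 2,
    ← mul_assoc, ← ENNReal.ofReal_mul hr.le, mul_inv_cancel₀ hr.ne', ENNReal.ofReal_one, one_mul]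

end Rescaling

theorem exists_sum_setLIntegral_Ioc_enorm_rotConv_sub_sq_le.{u} {φ : ℝ → ℂ} {B B' : ℝ}
    (hφ : HasCubicDecay φ B) (hη : HasCubicDecay (dilationDeriv φ) B')
    (hsupp : support (𝓕 φ) ⊆ Ioo 0 1) :
    ∃ C : ℝ≥0∞, C ≠ ∞ ∧ ∀ {ι : Type u} [Fintype ι] {a b : ι → ℝ}, (∀ m, a m < b m) →
      (∀ m, (0 : ℝ) ∉ Ioo (a m) (b m)) → Pairwise (Disjoint on fun m => Ioo (a m) (b m)) →
      ∀ {K : ℝ≥0∞} {f : ℝ → ℂ}, K ≠ ∞ → IsBMOWith K f → ∀ {u v : ℝ}, u < v → ∃ c : ι → ℂ,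
        ∑ m, ∫⁻ x in Ioc u v, ‖rotConv φ (a m) (b m) f x - c m‖ₑ ^ 2 ≤
          C * K ^ 2 * ENNReal.ofReal (v - u) := by
  obtain ⟨C, hC, unit_le⟩ := exists_sum_setLIntegral_enorm_rotConv_sub_sq_le.{u} hφ hη hsupp
  refine ⟨C, hC, fun {ι _ a b} hab h0 hd {K f} hK hf {u v} huv => ?_⟩
  obtain ⟨x₀, r, hr, rfl, rfl⟩ : ∃ x₀ r : ℝ, 0 < r ∧ r * (-1) + x₀ = u ∧ r * 1 + x₀ = v :=
    ⟨(u + v) / 2, (v - u) / 2, by linarith, by ring, by ring⟩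
  have preimage_Ioo m : Ioo (r * a m) (r * b m) = (r⁻¹ * ·) ⁻¹' Ioo (a m) (b m) := by
    simp [hr, div_inv_eq_mul, mul_comm]
  obtain ⟨c, hc⟩ := unit_le (a := fun m => r * a m) (b := fun m => r * b m)
    (fun m => mul_lt_mul_of_pos_left (hab m) hr)
    (fun m => by simpa only [preimage_Ioo, mem_preimage, mul_zero] using h0 m)
    (fun m m' hne => by simpa only [onFun, preimage_Ioo] using (hd hne).preimage _)
    hK (hf.comp_mul_add hr x₀)
  refine ⟨fun m => e2pi (-(a m * x₀)) * c m, ?_⟩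
  simp only [setLIntegral_enorm_rotConv_sub_sq _ _ _ _ hr x₀, ← Finset.mul_sum]
  rw [mul_comm]
  gcongr
  linarith

theorem statement7_general.{u} {φ : ℝ → ℂ} {B B' : ℝ} (hφ : HasCubicDecay φ B)
    (hη : HasCubicDecay (dilationDeriv φ) B') (hsupp : support (𝓕 φ) ⊆ Ioo 0 1) :
    ∃ C : ℝ, 0 < C ∧ ∀ (ι : Type u) [Fintype ι] (a b : ι → ℝ), (∀ m, a m < b m) →
      (∀ m, 0 ∉ Ioo (a m) (b m)) → Pairwise (Disjoint on fun m => Ioo (a m) (b m)) →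
      ∀ f : ℝ → ℂ, LocallyIntegrable f → ∀ K : ℝ,
        (∀ u v : ℝ, u < v → ⨍ x in u..v, ‖f x - ⨍ r in u..v, f r‖ ≤ K) →
        ∀ u v : ℝ, u < v →
          ⨍ x in u..v, √(∑ m, ‖rotConv φ (a m) (b m) f x -
            ⨍ r in u..v, rotConv φ (a m) (b m) f r‖ ^ 2) ≤ C * K := by
  obtain ⟨C, hC, main⟩ := exists_sum_setLIntegral_Ioc_enorm_rotConv_sub_sq_le.{u} hφ hη hsupp
  refine ⟨2 * (√C.toReal + 1), by positivity,
    fun ι _ a b hab h0 hd f hf K hK u v huv => ?_⟩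
  have hf_bmo := IsBMOWith.of_average_le hf hK
  have K_nonneg : 0 ≤ K := (integral_nonneg fun x => norm_nonneg _).trans (hK 0 1 one_pos)
  obtain ⟨c, hc⟩ := main hab h0 hd ENNReal.ofReal_ne_top hf_bmo huv
  have hφf m := aestronglyMeasurable_rotConv hf.aestronglyMeasurable hφ.continuous (a m) (b m)
  have hD : C * ENNReal.ofReal K ^ 2 ≤ ENNReal.ofReal (((√C.toReal + 1) * K) ^ 2) := by
    rw [mul_pow, ENNReal.ofReal_mul (by positivity), ENNReal.ofReal_pow K_nonneg]
    gcongr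
    refine (ENNReal.le_ofReal_iff_toReal_le hC (by positivity)).2 ?_
    nlinarith [Real.sq_sqrt (ENNReal.toReal_nonneg (a := C)), Real.sqrt_nonneg C.toReal]
  rw [mul_assoc, uIoc_of_le huv.le]
  refine average_sqrt_sum_sq_sub_average_le (fun m => (hφf m).restrict) (by positivity)
    (hc.trans ?_)
  rw [Measure.restrict_apply_univ, Real.volume_Ioc]
  gcongr

/-- uniform boundedness of the rotated family from `BMO` to `BMO(ℓ²)`
(i.e. on `Ḟ^0_{∞2}`): if the BMO seminorm of `f` is at most `K` (over all bounded intervals),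
then the `ℓ²`-valued BMO seminorm of `{g_m}` is at most `C K`. -/
theorem statement7 (φ : SchwartzMap ℝ ℂ)
    (hφ : Function.support (𝓕 ⇑φ) ⊆ Set.Ioo 0 1) :
    ∃ C : ℝ, 0 < C ∧ ∀ (N : ℕ) (a b : Fin N → ℝ), Admissible a b →
      ∀ (f : ℝ → ℂ), LocallyIntegrable f → ∀ K : ℝ,
        (∀ u v : ℝ, u < v →
          (v - u)⁻¹ * ∫ x in u..v, ‖f x - (v - u)⁻¹ • ∫ r in u..v, f r‖ ≤ K) →
        ∀ u v : ℝ, u < v →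
          (v - u)⁻¹ * ∫ x in u..v,
              (∑ m : Fin N,
                ‖rotConv ⇑φ (a m) (b m) f x -
                  (v - u)⁻¹ • ∫ r in u..v, rotConv ⇑φ (a m) (b m) f r‖ ^ 2) ^ (1/2 : ℝ)
            ≤ C * K := by
  obtain ⟨B, hB⟩ := HasCubicDecay.exists_of_schwartzMap φ
  obtain ⟨B', hB'⟩ := HasCubicDecay.exists_dilationDeriv_of_schwartzMap φ
  obtain ⟨C, hC, le_mul⟩ := statement7_general hB hB' hφ
  simp only [interval_average_eq, smul_eq_mul, Real.sqrt_eq_rpow] at le_mul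
  exact ⟨C, hC, fun N a b hab => le_mul (Fin N) a b hab.1 hab.2.1 fun m m' hne =>
    (hab.2.2 m m' hne).mono Ioo_subset_Icc_self Ioo_subset_Icc_self⟩
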